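/- arXiv:2006.01678 — 3 statements merged into one kernel-verified Lean document; each statement's English description precedes it below -/
import Mathlib

section
/- Let X be a connected chordal bipartite graph, let α be a vertex of X, and let (Ω,S) be a coherent configuration on the vertex set Ω of X compatible with X in which α is distinguished. Then for all distinct fibers Δ and Γ of (Ω,S), ‖e_{Δ,Γ}‖ = ‖e_{Γ,Δ}‖. -/
open SimpleGraph

/-- A coherent configuration on a set `Ω`: a partition `S` of `Ω × Ω` into nonempty
binary relations such that the diagonal is a union of elements of `S`, the converse of
every element of `S` belongs to `S`, and the intersection numbers are well defined. -/
structure CoherentConfiguration (Ω : Type*) where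
  S : Set (Set (Ω × Ω))
  nonempty_mem : ∀ s ∈ S, s.Nonempty
  partition : ∀ p : Ω × Ω, ∃! s, s ∈ S ∧ p ∈ s
  diag_union : ∀ s ∈ S, (∃ p ∈ s, p.1 = p.2) → ∀ p ∈ s, p.1 = p.2
  converse_mem : ∀ s ∈ S, {p : Ω × Ω | (p.2, p.1) ∈ s} ∈ S
  regularity : ∀ r ∈ S, ∀ s ∈ S, ∀ t ∈ S, ∀ p ∈ t, ∀ q ∈ t,
    {γ : Ω | (p.1, γ) ∈ r ∧ (γ, p.2) ∈ s}.ncard =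
      {γ : Ω | (q.1, γ) ∈ r ∧ (γ, q.2) ∈ s}.ncard

/-- `Δ` is a fiber of the coherent configuration, i.e. `{(δ,δ) : δ ∈ Δ} ∈ S`. -/
def CoherentConfiguration.IsFiber {Ω : Type*} (C : CoherentConfiguration Ω)
    (Δ : Set Ω) : Prop :=
  {p : Ω × Ω | p.1 = p.2 ∧ p.1 ∈ Δ} ∈ C.S

/-- The coherent configuration is compatible with the graph `X`: the arc set of `X`
is a union of elements of `S`. -/
def CoherentConfiguration.Compatible {Ω : Type*} (C : CoherentConfiguration Ω)
    (X : SimpleGraph Ω) : Prop :=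
  ∀ s ∈ C.S, (∃ p ∈ s, X.Adj p.1 p.2) → ∀ p ∈ s, X.Adj p.1 p.2

/-- The vertex `α` is distinguished in the coherent configuration: `{(α,α)} ∈ S`. -/
def CoherentConfiguration.Distinguished {Ω : Type*} (C : CoherentConfiguration Ω)
    (α : Ω) : Prop :=
  ({(α, α)} : Set (Ω × Ω)) ∈ C.S

/-- `P`, `Q` form a bipartition of the graph `X`. -/
def IsBipartition {V : Type*} (X : SimpleGraph V) (P Q : Set V) : Prop :=
  (∀ v, v ∈ P ∨ v ∈ Q) ∧ Disjoint P Q ∧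
    ∀ u v, X.Adj u v → (u ∈ P ∧ v ∈ Q) ∨ (u ∈ Q ∧ v ∈ P)

/-- `X` contains no induced cycle of length at least 6. -/
def NoLongInducedCycle {V : Type*} (X : SimpleGraph V) : Prop :=
  ∀ n : ℕ, 6 ≤ n → IsEmpty (SimpleGraph.cycleGraph n ↪g X)

/-- The equivalence relation `e_{Δ,Γ}` on `Δ`: two vertices of `Δ` are equivalent iff
they have the same neighbors in `Γ`; viewed as a set of pairs. -/
def eRel {V : Type*} (X : SimpleGraph V) (Δ Γ : Set V) : Set (V × V) :=
  {p | p.1 ∈ Δ ∧ p.2 ∈ Δ ∧ X.neighborSet p.1 ∩ Γ = X.neighborSet p.2 ∩ Γ}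

/-- The number `‖e_{Δ,Γ}‖` of classes of the equivalence relation `e_{Δ,Γ}`,
i.e. the number of distinct sets of the form `N(δ) ∩ Γ` for `δ ∈ Δ`. -/
noncomputable def numClasses {V : Type*} (X : SimpleGraph V) (Δ Γ : Set V) : ℕ :=
  ((fun δ => X.neighborSet δ ∩ Γ) '' Δ).ncard

/-!
Two vertices of a common fiber see the same basis relations with the same multiplicities, so a walk
from one of them to the distinguished vertex can be copied to a walk of the same length from the
other. In a bipartite graph the two vertices are then nonadjacent: fibers are independent sets.

In the subgraph induced on `Δ ∪ Γ`, vertices with a common neighbor therefore lie in a common fiber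
and have equal degrees. If two of them had different neighborhoods, there would be an induced path
on four vertices. The first and third vertices of an induced path have equal degrees, and unless it
has at most three vertices their neighborhoods differ, so some neighbor of the first is not adjacent
to the third. That neighbor extends the path at its front, since a chord would close an induced
cycle of length other than four. Induced paths would thus be arbitrarily long. Hence vertices with a
common neighbor have the same neighbors, and a class of `e_{Δ,Γ}` corresponds to the class of
`e_{Γ,Δ}` to which it is completely joined.
-/

/-- Chordal bipartite graphs, encoded as the graphs all of whose induced cycles have length four:
excluding triangles and the longer induced odd cycles is what forces bipartiteness. -/
def IsChordalBipartite {V : Type*} (X : SimpleGraph V) : Prop :=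
  ∀ n, 3 ≤ n → cycleGraph n ⊴ X → n = 4

section FinGraphs

lemma comap_succ_pathGraph (n : ℕ) : (pathGraph (n + 1)).comap Fin.succ = pathGraph n := by
  ext i j
  simp only [comap_adj, pathGraph_adj, Fin.val_succ]
  omega

lemma pathGraph_adj_zero_succ {n : ℕ} (i : Fin (n + 1)) :
    (pathGraph (n + 2)).Adj 0 i.succ ↔ i = 0 := by
  simp only [pathGraph_adj, Fin.ext_iff, Fin.val_succ, Fin.val_zero]
  omega

lemma cycleGraph_adj_of_lt {n : ℕ} {i j : Fin n} (h : i < j) :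
    (cycleGraph n).Adj i j ↔ i.val + 1 = j.val ∨ j.val + 1 = n + i.val := by
  rw [cycleGraph_adj', Fin.coe_sub_iff_lt.2 h, Fin.coe_sub_iff_le.2 h.le]
  omega

lemma comap_succ_cycleGraph (n : ℕ) : (cycleGraph (n + 1)).comap Fin.succ = pathGraph n := by
  ext i j
  wlog hij : i ≤ j generalizing i j
  · simpa only [adj_comm] using this j i (le_of_not_ge hij)
  rcases hij.eq_or_lt with rfl | hlt
  · simp
  · simp only [comap_adj, cycleGraph_adj_of_lt (Fin.succ_lt_succ_iff.2 hlt), pathGraph_adj,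
      Fin.val_succ]
    omega

lemma cycleGraph_adj_zero_succ {n : ℕ} (i : Fin (n + 1)) :
    (cycleGraph (n + 2)).Adj 0 i.succ ↔ i = 0 ∨ i = Fin.last n := by
  simp only [cycleGraph_adj_of_lt i.succ_pos, Fin.ext_iff, Fin.val_succ, Fin.val_zero,
    Fin.val_last]
  omega

end FinGraphs

section Graph

variable {V : Type*} {X : SimpleGraph V}

lemma not_cycleGraph_isIndContained_of_odd (hX : X.IsBipartite) {n : ℕ} (hn : 2 ≤ n)
    (hodd : Odd n) : ¬ cycleGraph n ⊴ X := by
  rintro ⟨f⟩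
  have hcol : (cycleGraph n).chromaticNumber ≤ 2 := (hX.of_hom f.toHom).chromaticNumber_le
  rw [chromaticNumber_cycleGraph_of_odd n hn hodd] at hcol
  exact absurd hcol (by decide)

lemma NoLongInducedCycle.isChordalBipartite (h : NoLongInducedCycle X) (hX : X.IsBipartite) :
    IsChordalBipartite X := by
  intro n hn hcycle
  have hlt : n < 6 := by
    by_contra! h6
    exact not_nonempty_iff.2 (h n h6) hcycle
  have heven : ¬ Odd n := fun hodd =>
    not_cycleGraph_isIndContained_of_odd hX (by omega) hodd hcycle
  rw [Nat.not_odd_iff] at heven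
  omega

lemma exists_embedding_cons {n : ℕ} {H : SimpleGraph (Fin n)} {G : SimpleGraph (Fin (n + 1))}
    (hG : G.comap Fin.succ = H) (f : H ↪g X) {x : V} (hx : x ∉ Set.range f)
    (hadj : ∀ i, X.Adj x (f i) ↔ G.Adj 0 i.succ) :
    ∃ g : G ↪g X, ⇑g = Fin.cons x f := by
  subst hG
  refine ⟨⟨⟨Fin.cons x f, Fin.cons_injective_iff.2 ⟨hx, f.injective⟩⟩, ?_⟩, rfl⟩
  intro i j
  cases i using Fin.cases <;> cases j using Fin.cases
  · simp
  · simp [hadj]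
  · simp [X.adj_comm, G.adj_comm, hadj]
  · simp

lemma IsBipartition.isBipartiteWith {P Q : Set V} (h : IsBipartition X P Q) :
    X.IsBipartiteWith P Q :=
  ⟨h.2.1, fun u v => h.2.2 u v⟩

namespace IsChordalBipartite

lemma induce (h : IsChordalBipartite X) (W : Set V) : IsChordalBipartite (X.induce W) :=
  fun n hn hcycle => h n hn (hcycle.trans ⟨Embedding.induce W⟩)

lemma not_adj_of_adj_zero (hX : IsChordalBipartite X) {n : ℕ} (f : pathGraph (n + 1) ↪g X)
    {x : V} (hx : x ∉ Set.range f) (h0 : X.Adj x (f 0))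
    (h2 : ∀ i : Fin (n + 1), i.val = 2 → ¬ X.Adj x (f i)) (k : ℕ) (hk : k < n + 1) (hpos : 0 < k) :
    ¬ X.Adj x (f ⟨k, hk⟩) := by
  induction k using Nat.strong_induction_on with
  | _ k ih =>
  intro hadj
  let p : pathGraph (k + 1) ↪g X := f.comp ⟨Fin.castLEEmb hk, by simp [pathGraph_adj]⟩
  have hxp : x ∉ Set.range p := fun ⟨i, hi⟩ => hx ⟨_, hi⟩
  have hp (i : Fin (k + 1)) : X.Adj x (p i) ↔ i = 0 ∨ i = Fin.last k := by
    rcases eq_or_ne i 0 with rfl | hi0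
    · exact iff_of_true h0 (.inl rfl)
    rcases eq_or_ne i (Fin.last k) with rfl | hik
    · exact iff_of_true hadj (.inr rfl)
    · exact iff_of_false (ih i (Fin.val_lt_last hik) (i.isLt.trans_le hk)
        (Fin.pos_iff_ne_zero.2 hi0)) (by simp [hi0, hik])
  obtain ⟨g, -⟩ := exists_embedding_cons (comap_succ_cycleGraph (k + 1)) p hxp fun i =>
    (hp i).trans (cycleGraph_adj_zero_succ i).symm
  have hk2 : k + 2 = 4 := hX _ (by omega) ⟨g⟩
  exact h2 ⟨k, hk⟩ (Nat.add_right_cancel hk2) hadj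

lemma exists_pathGraph_embedding_cons (hX : IsChordalBipartite X) {n : ℕ}
    (f : pathGraph (n + 1) ↪g X) {x : V} (hx : x ∉ Set.range f) (h0 : X.Adj x (f 0))
    (h2 : ∀ i : Fin (n + 1), i.val = 2 → ¬ X.Adj x (f i)) :
    ∃ g : pathGraph (n + 2) ↪g X, ⇑g = Fin.cons x f := by
  refine exists_embedding_cons (comap_succ_pathGraph (n + 1)) f hx fun i => ?_
  rw [pathGraph_adj_zero_succ]
  rcases eq_or_ne i 0 with rfl | hi
  · exact iff_of_true h0 rfl
  · exact iff_of_false (hX.not_adj_of_adj_zero f hx h0 h2 i i.isLt (Fin.pos_iff_ne_zero.2 hi)) hi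

lemma pathGraph_four_isIndContained (hX : IsChordalBipartite X) {a u v w : V} (hau : X.Adj a u)
    (huw : X.Adj u w) (hwv : X.Adj w v) (hav : ¬ X.Adj a v) (huv : u ≠ v) :
    pathGraph 4 ⊴ X := by
  let f₁ : pathGraph 1 ↪g X :=
    ⟨⟨fun _ => v, Function.injective_of_subsingleton _⟩, by simp [pathGraph_adj]⟩
  obtain ⟨f₂, hf₂⟩ := hX.exists_pathGraph_embedding_cons f₁ (x := w)
    (by simp [f₁, hwv.ne]) hwv (by omega)
  obtain ⟨f₃, hf₃⟩ := hX.exists_pathGraph_embedding_cons f₂ (x := u)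
    (by simp [hf₂, f₁, huv, huw.ne]) (by simpa [hf₂] using huw) (by omega)
  have huv' : ¬ X.Adj u v := by
    have h02 : ¬ X.Adj (f₃ 0) (f₃ 2) := by simp [f₃.map_adj_iff, pathGraph_adj]
    rw [hf₃, hf₂] at h02
    exact h02
  have haw : a ≠ w := by rintro rfl; exact hav hwv
  have hav' : a ≠ v := by rintro rfl; exact huv' hau.symm
  obtain ⟨f₄, -⟩ := hX.exists_pathGraph_embedding_cons f₃ (x := a)
    (by simp [hf₃, hf₂, f₁, hau.ne, haw, hav']) (by simpa [hf₃] using hau) fun i hi => by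
      obtain rfl : i = 2 := Fin.ext hi
      rw [hf₃, hf₂]
      exact hav
  exact ⟨f₄⟩

variable [Finite V]

lemma pathGraph_succ_isIndContained (hX : IsChordalBipartite X)
    (hdeg : ∀ ⦃u v w⦄, X.Adj u w → X.Adj v w →
      (X.neighborSet u).ncard = (X.neighborSet v).ncard)
    {n : ℕ} (hpath : pathGraph (n + 4) ⊴ X) : pathGraph (n + 5) ⊴ X := by
  obtain ⟨f⟩ := hpath
  have hadj {i j : ℕ} (hi : i < n + 4) (hj : j < n + 4) :
      X.Adj (f ⟨i, hi⟩) (f ⟨j, hj⟩) ↔ i + 1 = j ∨ j + 1 = i :=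
    f.map_adj_iff.trans pathGraph_adj
  have hnsub : ¬ X.neighborSet (f 0) ⊆ X.neighborSet (f ⟨2, by omega⟩) := by
    intro hsub
    have heq : X.neighborSet (f 0) = X.neighborSet (f ⟨2, by omega⟩) :=
      Set.eq_of_subset_of_ncard_le hsub
        (hdeg (w := f ⟨1, by omega⟩) ((hadj _ _).2 (.inl rfl)) ((hadj _ _).2 (.inr rfl))).ge
    have hmem : f ⟨3, by omega⟩ ∈ X.neighborSet (f 0) := heq ▸ (hadj _ _).2 (.inl rfl)
    have h03 : 0 + 1 = 3 ∨ 3 + 1 = 0 := (hadj _ _).1 hmem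
    omega
  obtain ⟨x, hx0, hx2⟩ := Set.not_subset.1 hnsub
  have hx : x ∉ Set.range f := by
    rintro ⟨⟨j, hj⟩, rfl⟩
    have hj0 : 0 + 1 = j ∨ j + 1 = 0 := (hadj _ _).1 hx0
    exact hx2 ((hadj _ _).2 (by omega))
  obtain ⟨g, -⟩ := hX.exists_pathGraph_embedding_cons f hx hx0.symm fun i hi => by
    rw [show i = ⟨2, by omega⟩ from Fin.ext hi]
    exact fun h => hx2 h.symm
  exact ⟨g⟩

theorem neighborSet_eq_of_adj_of_adj (hX : IsChordalBipartite X)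
    (hdeg : ∀ ⦃u v w⦄, X.Adj u w → X.Adj v w →
      (X.neighborSet u).ncard = (X.neighborSet v).ncard)
    {u v w : V} (hu : X.Adj u w) (hv : X.Adj v w) : X.neighborSet u = X.neighborSet v := by
  by_contra hne
  have hnsub : ¬ X.neighborSet u ⊆ X.neighborSet v := fun hsub =>
    hne (Set.eq_of_subset_of_ncard_le hsub (hdeg hu hv).ge)
  obtain ⟨a, hua, hva⟩ := Set.not_subset.1 hnsub
  have hpath (n : ℕ) : pathGraph (n + 4) ⊴ X := by
    induction n with
    | zero =>
      exact hX.pathGraph_four_isIndContained hua.symm hu hv.symm (fun h => hva h.symm)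
        (by rintro rfl; exact hne rfl)
    | succ n ih => exact hX.pathGraph_succ_isIndContained hdeg ih
  obtain ⟨f⟩ := hpath (Nat.card V)
  have hcard := Nat.card_le_card_of_injective f f.injective
  rw [Nat.card_fin] at hcard
  omega

theorem neighborSet_inter_eq_of_adj_of_adj (hX : IsChordalBipartite X) {W : Set V}
    (hdeg : ∀ u ∈ W, ∀ v ∈ W, ∀ w ∈ W, X.Adj u w → X.Adj v w →
      (X.neighborSet u ∩ W).ncard = (X.neighborSet v ∩ W).ncard)
    {u v w : V} (hu : u ∈ W) (hv : v ∈ W) (hw : w ∈ W) (huw : X.Adj u w) (hvw : X.Adj v w) :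
    X.neighborSet u ∩ W = X.neighborSet v ∩ W := by
  have himage (x : W) :
      Subtype.val '' (X.induce W).neighborSet x = X.neighborSet x ∩ W := by
    rw [neighborSet_induce, Set.image_preimage_eq_inter_range, Subtype.range_coe]
  have hncard (x : W) : ((X.induce W).neighborSet x).ncard = (X.neighborSet x ∩ W).ncard := by
    rw [← himage, Set.ncard_image_of_injective _ Subtype.val_injective]
  have heq := (hX.induce W).neighborSet_eq_of_adj_of_adj (u := ⟨u, hu⟩) (v := ⟨v, hv⟩)
    (w := ⟨w, hw⟩) (fun x y z hxz hyz => by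
      rw [hncard, hncard]; exact hdeg x x.2 y y.2 z z.2 hxz hyz) huw hvw
  rw [← himage ⟨u, hu⟩, ← himage ⟨v, hv⟩, heq]

end IsChordalBipartite

end Graph

section NumClasses

variable {V : Type*} {X : SimpleGraph V} {Δ Γ : Set V}

lemma numClasses_le_of_forall_exists_adj (hΓ : Γ.Finite) (hex : ∀ δ ∈ Δ, ∃ γ ∈ Γ, X.Adj δ γ)
    (heq : ∀ δ ∈ Δ, ∀ δ' ∈ Δ, ∀ γ ∈ Γ, X.Adj δ γ → X.Adj δ' γ →
      X.neighborSet δ ∩ Γ = X.neighborSet δ' ∩ Γ) :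
    numClasses X Δ Γ ≤ numClasses X Γ Δ := by
  -- A class, given by its set `s` of neighbors in `Γ`, is the set of neighbors in `Δ` of any
  -- vertex of `s`.
  refine Set.ncard_le_ncard_of_injOn (fun s => {δ ∈ Δ | X.neighborSet δ ∩ Γ = s}) ?_ ?_
    (hΓ.image _)
  · rintro _ ⟨δ, hδ, rfl⟩
    obtain ⟨γ, hγ, hadj⟩ := hex δ hδ
    refine ⟨γ, hγ, Set.ext fun δ' => ⟨fun ⟨hγδ', hδ'⟩ => ⟨hδ', ?_⟩, fun ⟨hδ', hs⟩ => ⟨?_, hδ'⟩⟩⟩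
    · exact heq δ' hδ' δ hδ γ hγ (X.adj_symm hγδ') hadj
    · have hmem : γ ∈ X.neighborSet δ' ∩ Γ := hs ▸ ⟨hadj, hγ⟩
      exact X.adj_symm hmem.1
  · rintro _ ⟨δ, hδ, rfl⟩ t - hst
    have hmem : δ ∈ {δ' ∈ Δ | X.neighborSet δ' ∩ Γ = t} := hst.subset ⟨hδ, rfl⟩
    exact hmem.2

lemma numClasses_le_one_of_forall_not_adj (h : ∀ δ ∈ Δ, ∀ γ ∈ Γ, ¬ X.Adj δ γ) :
    numClasses X Δ Γ ≤ 1 := by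
  have hsub : (fun δ => X.neighborSet δ ∩ Γ) '' Δ ⊆ {∅} := by
    rintro _ ⟨δ, hδ, rfl⟩
    exact Set.eq_empty_of_forall_notMem fun γ hγ => h δ hδ γ hγ.2 hγ.1
  exact (Set.ncard_le_ncard hsub).trans_eq (Set.ncard_singleton _)

lemma numClasses_pos (hΔ : Δ.Finite) (hne : Δ.Nonempty) : 0 < numClasses X Δ Γ :=
  (Set.ncard_pos (hΔ.image _)).2 (hne.image _)

end NumClasses

namespace CoherentConfiguration

variable {Ω : Type*} (C : CoherentConfiguration Ω)

/-- The element of `C.S` containing the pair `p`. -/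
noncomputable def color (p : Ω × Ω) : Set (Ω × Ω) :=
  (C.partition p).choose

/-- The relation of lying in a common fiber. -/
def SameFiber (β β' : Ω) : Prop :=
  C.color (β, β) = C.color (β', β')

variable {C}

lemma color_mem (p : Ω × Ω) : C.color p ∈ C.S :=
  (C.partition p).choose_spec.1.1

lemma mem_color (p : Ω × Ω) : p ∈ C.color p :=
  (C.partition p).choose_spec.1.2

lemma color_eq_iff {s : Set (Ω × Ω)} (hs : s ∈ C.S) {p : Ω × Ω} : C.color p = s ↔ p ∈ s :=
  ⟨fun h => h ▸ mem_color p, fun h => (C.partition p).unique ⟨color_mem p, mem_color p⟩ ⟨hs, h⟩⟩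

lemma IsFiber.mem_iff_color_eq {Δ : Set Ω} (hΔ : C.IsFiber Δ) {β : Ω} :
    β ∈ Δ ↔ C.color (β, β) = {p | p.1 = p.2 ∧ p.1 ∈ Δ} := by
  rw [color_eq_iff hΔ]
  exact (and_iff_right rfl).symm

lemma IsFiber.sameFiber {Δ : Set Ω} (hΔ : C.IsFiber Δ) {β β' : Ω} (hβ : β ∈ Δ) (hβ' : β' ∈ Δ) :
    C.SameFiber β β' :=
  (hΔ.mem_iff_color_eq.1 hβ).trans (hΔ.mem_iff_color_eq.1 hβ').symm

lemma SameFiber.mem_iff {β β' : Ω} (h : C.SameFiber β β') {Δ : Set Ω} (hΔ : C.IsFiber Δ) :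
    β ∈ Δ ↔ β' ∈ Δ := by
  rw [hΔ.mem_iff_color_eq, hΔ.mem_iff_color_eq, h]

lemma Distinguished.eq_of_sameFiber {α β : Ω} (hα : C.Distinguished α) (h : C.SameFiber α β) :
    β = α := by
  have hβ : C.color (β, β) = {(α, α)} := h.symm.trans ((color_eq_iff hα).2 rfl)
  exact congrArg Prod.fst ((color_eq_iff hα).1 hβ)

lemma IsFiber.nonempty {Δ : Set Ω} (hΔ : C.IsFiber Δ) : Δ.Nonempty :=
  let ⟨p, hp⟩ := C.nonempty_mem _ hΔ
  ⟨p.1, hp.2⟩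

lemma sameFiber_snd_of_color_eq {p q : Ω × Ω} (h : C.color p = C.color q) :
    C.SameFiber p.2 q.2 := by
  have hdiag {x y : Ω} (hxy : (x, y) ∈ C.color (p.2, p.2)) : x = y :=
    C.diag_union _ (color_mem _) ⟨_, mem_color _, rfl⟩ _ hxy
  have hreg := C.regularity _ (color_mem p) _ (color_mem (p.2, p.2)) _ (color_mem p)
    p (mem_color p) q (h ▸ mem_color q)
  have hp : {γ | (p.1, γ) ∈ C.color p ∧ (γ, p.2) ∈ C.color (p.2, p.2)} = {p.2} :=
    Set.eq_singleton_iff_unique_mem.2 ⟨⟨mem_color p, mem_color _⟩, fun γ hγ => hdiag hγ.2⟩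
  rw [hp, Set.ncard_singleton] at hreg
  obtain ⟨γ, -, hγ⟩ := Set.nonempty_of_ncard_ne_zero (hreg ▸ one_ne_zero)
  obtain rfl := hdiag hγ
  exact ((color_eq_iff (color_mem _)).2 hγ).symm

lemma SameFiber.ncard_color_eq {β β' : Ω} (h : C.SameFiber β β') (s : Set (Ω × Ω)) :
    {γ | C.color (β, γ) = s}.ncard = {γ | C.color (β', γ) = s}.ncard := by
  by_cases hs : s ∈ C.S
  · simpa [color_eq_iff hs] using C.regularity s hs _ (C.converse_mem s hs) _ (color_mem (β, β))
      (β, β) (mem_color _) (β', β') (h ▸ mem_color _)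
  · have hne (p : Ω × Ω) : C.color p ≠ s := fun hp => hs (hp ▸ color_mem p)
    simp [hne]

lemma Compatible.adj_iff_of_color_eq {X : SimpleGraph Ω} (hX : C.Compatible X) {p q : Ω × Ω}
    (h : C.color p = C.color q) : X.Adj p.1 p.2 ↔ X.Adj q.1 q.2 :=
  ⟨fun hp => hX _ (color_mem p) ⟨p, mem_color p, hp⟩ q (h ▸ mem_color q),
    fun hq => hX _ (color_mem q) ⟨q, mem_color q, hq⟩ p (h ▸ mem_color p)⟩

variable [Finite Ω] {X : SimpleGraph Ω}

lemma SameFiber.exists_perm_color_eq {β β' : Ω} (h : C.SameFiber β β') :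
    ∃ σ : Equiv.Perm Ω, ∀ γ, C.color (β, γ) = C.color (β', σ γ) := by
  have e (s : Set (Ω × Ω)) :
      Nonempty ({γ // C.color (β, γ) = s} ≃ {γ // C.color (β', γ) = s}) :=
    Finite.card_eq.1 (h.ncard_color_eq s)
  exact ⟨Equiv.ofFiberEquiv fun s => (e s).some, fun γ =>
    (Equiv.ofFiberEquiv_map (f := fun γ => C.color (β, γ)) (g := fun γ => C.color (β', γ))
      _ γ).symm⟩

lemma SameFiber.exists_perm_adj_iff (hX : C.Compatible X) {β β' : Ω} (h : C.SameFiber β β') :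
    ∃ σ : Equiv.Perm Ω, ∀ γ, C.SameFiber γ (σ γ) ∧ (X.Adj β γ ↔ X.Adj β' (σ γ)) := by
  obtain ⟨σ, hσ⟩ := h.exists_perm_color_eq
  exact ⟨σ, fun γ => ⟨sameFiber_snd_of_color_eq (hσ γ), hX.adj_iff_of_color_eq (hσ γ)⟩⟩

lemma SameFiber.ncard_neighborSet_inter_eq (hX : C.Compatible X) {β β' : Ω}
    (h : C.SameFiber β β') {W : Set Ω} (hW : ∀ x y, C.SameFiber x y → (x ∈ W ↔ y ∈ W)) :
    (X.neighborSet β ∩ W).ncard = (X.neighborSet β' ∩ W).ncard := by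
  obtain ⟨σ, hσ⟩ := h.exists_perm_adj_iff hX
  have hpre : σ ⁻¹' (X.neighborSet β' ∩ W) = X.neighborSet β ∩ W :=
    Set.ext fun γ => and_congr (hσ γ).2.symm (hW _ _ (hσ γ).1).symm
  rw [← hpre, Set.ncard_preimage_of_injective_subset_range σ.injective (by simp)]

lemma SameFiber.exists_walk_length_eq (hX : C.Compatible X) {β β' γ : Ω}
    (h : C.SameFiber β β') (p : X.Walk β γ) :
    ∃ γ', C.SameFiber γ γ' ∧ ∃ q : X.Walk β' γ', q.length = p.length := by
  induction p generalizing β' with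
  | nil => exact ⟨β', h, .nil, rfl⟩
  | @cons _ δ _ hadj _ ih =>
    obtain ⟨σ, hσ⟩ := h.exists_perm_adj_iff hX
    obtain ⟨γ', hγ', q, hq⟩ := ih (hσ δ).1
    exact ⟨γ', hγ', .cons ((hσ δ).2.1 hadj) q, by simp [hq]⟩

lemma IsFiber.isIndepSet (hX : C.Compatible X) (hconn : X.Preconnected) (hbip : X.IsBipartite)
    {α : Ω} (hα : C.Distinguished α) {Δ : Set Ω} (hΔ : C.IsFiber Δ) : X.IsIndepSet Δ := by
  intro u hu v hv _ hadj
  obtain ⟨p⟩ := hconn u α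
  obtain ⟨γ, hγ, q, hq⟩ := (hΔ.sameFiber hu hv).exists_walk_length_eq hX p
  obtain rfl := hα.eq_of_sameFiber hγ
  have heven := two_colorable_iff_forall_loop_even.1 hbip u (.cons hadj (q.append p.reverse))
  simp [hq, Nat.even_add_one] at heven

variable {Δ Γ : Set Ω}

lemma IsFiber.neighborSet_inter_eq (hX : C.Compatible X) (hchordal : IsChordalBipartite X)
    (hΔ : C.IsFiber Δ) (hΓ : C.IsFiber Γ) (hΔi : X.IsIndepSet Δ) (hΓi : X.IsIndepSet Γ)
    {δ δ' γ : Ω} (hδ : δ ∈ Δ) (hδ' : δ' ∈ Δ) (hγ : γ ∈ Γ) (h : X.Adj δ γ) (h' : X.Adj δ' γ) :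
    X.neighborSet δ ∩ Γ = X.neighborSet δ' ∩ Γ := by
  have hW (x y : Ω) (hxy : C.SameFiber x y) : x ∈ Δ ∪ Γ ↔ y ∈ Δ ∪ Γ :=
    or_congr (hxy.mem_iff hΔ) (hxy.mem_iff hΓ)
  have hsame : ∀ u ∈ Δ ∪ Γ, ∀ v ∈ Δ ∪ Γ, ∀ w ∈ Δ ∪ Γ, X.Adj u w → X.Adj v w →
      C.SameFiber u v := by
    have hΔΔ {x y : Ω} (hx : x ∈ Δ) (hy : y ∈ Δ) (hxy : X.Adj x y) : False :=
      hΔi hx hy hxy.ne hxy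
    have hΓΓ {x y : Ω} (hx : x ∈ Γ) (hy : y ∈ Γ) (hxy : X.Adj x y) : False :=
      hΓi hx hy hxy.ne hxy
    rintro u hu v hv w (hw | hw) huw hvw
    · exact hΓ.sameFiber (hu.resolve_left (hΔΔ · hw huw)) (hv.resolve_left (hΔΔ · hw hvw))
    · exact hΔ.sameFiber (hu.resolve_right (hΓΓ · hw huw)) (hv.resolve_right (hΓΓ · hw hvw))
  have heq : X.neighborSet δ ∩ (Δ ∪ Γ) = X.neighborSet δ' ∩ (Δ ∪ Γ) :=
    hchordal.neighborSet_inter_eq_of_adj_of_adj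
      (fun u hu v hv w hw huw hvw =>
        (hsame u hu v hv w hw huw hvw).ncard_neighborSet_inter_eq hX hW)
      (.inl hδ) (.inl hδ') (.inr hγ) h h'
  simpa [Set.inter_assoc, Set.union_inter_cancel_right] using congrArg (· ∩ Γ) heq

lemma IsFiber.numClasses_le (hX : C.Compatible X) (hchordal : IsChordalBipartite X)
    (hΔ : C.IsFiber Δ) (hΓ : C.IsFiber Γ) (hΔi : X.IsIndepSet Δ) (hΓi : X.IsIndepSet Γ) :
    numClasses X Δ Γ ≤ numClasses X Γ Δ := by
  by_cases hE : ∃ δ ∈ Δ, ∃ γ ∈ Γ, X.Adj δ γ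
  · obtain ⟨δ₀, hδ₀, γ₀, hγ₀, h₀⟩ := hE
    refine numClasses_le_of_forall_exists_adj Γ.toFinite (fun δ hδ => ?_)
      fun δ hδ δ' hδ' γ hγ => hΔ.neighborSet_inter_eq hX hchordal hΓ hΔi hΓi hδ hδ' hγ
    obtain ⟨σ, hσ⟩ := (hΔ.sameFiber hδ₀ hδ).exists_perm_adj_iff hX
    exact ⟨σ γ₀, ((hσ γ₀).1.mem_iff hΓ).1 hγ₀, (hσ γ₀).2.1 h₀⟩
  · push Not at hE
    exact (numClasses_le_one_of_forall_not_adj hE).trans (numClasses_pos Γ.toFinite hΓ.nonempty)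

end CoherentConfiguration

theorem stmt_8 {Ω : Type*} [Fintype Ω] (X : SimpleGraph Ω) (P Q : Set Ω)
    (hconn : X.Connected) (hbip : IsBipartition X P Q) (hchordal : NoLongInducedCycle X)
    (α : Ω) (C : CoherentConfiguration Ω)
    (hcomp : C.Compatible X) (hdist : C.Distinguished α)
    (Δ Γ : Set Ω) (hΔ : C.IsFiber Δ) (hΓ : C.IsFiber Γ) (hne : Δ ≠ Γ) :
    numClasses X Δ Γ = numClasses X Γ Δ := by
  have hX : X.IsBipartite := hbip.isBipartiteWith.isBipartite
  have hindep {Φ : Set Ω} (hΦ : C.IsFiber Φ) : X.IsIndepSet Φ :=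
    hΦ.isIndepSet hcomp hconn.preconnected hX hdist
  have hchordal' := hchordal.isChordalBipartite hX
  exact le_antisymm
    (hΔ.numClasses_le hcomp hchordal' hΓ (hindep hΔ) (hindep hΓ))
    (hΓ.numClasses_le hcomp hchordal' hΔ (hindep hΓ) (hindep hΔ))
end

section
/- Let X be a connected chordal bipartite graph, let α be a vertex of X, and let (Ω,S) be a coherent configuration on the vertex set Ω of X compatible with X in which α is distinguished. Then for every fiber Δ of (Ω,S), the set of equivalence relations {e_{Δ,Γ} : Γ a fiber of (Ω,S) distinct from Δ} is linearly ordered by inclusion: for all fibers Γ and Λ distinct from Δ, either e_{Δ,Γ} ⊆ e_{Δ,Λ} or e_{Δ,Λ} ⊆ e_{Δ,Γ}. -/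
open SimpleGraph

/-!
In a finite chordal bipartite graph no infinite walk `a₀, a₁, …` can satisfy `aₙ ≁ aₙ₊₃` for
all `n`: a shortest chord `aᵢ ~ aᵢ₊ₖ`, `k ≥ 2`, would have `k` odd and at least `5`, and so close
an induced cycle on `k + 1 ≥ 6` vertices; with no chord at all the walk would be injective.

Coherence produces such walks. Regularity makes the neighborhoods in a fiber `B` of the vertices
of a fiber `A` an antichain. If `x, z ∈ A` have a common neighbor `y ∈ B` but different
neighborhoods in `B`, the antichain property yields `w ∈ B` adjacent to `z` and not to `x`, and
`y, z, w` is again such a configuration with `A` and `B` exchanged; iterating gives a forbidden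
walk. Hence vertices of `A` with a common neighbor in `B` are equivalent.
If `e_{Δ,Γ}` and `e_{Δ,Λ}` are incomparable, a walk visiting `Δ, Γ, Δ, Λ, Δ, Γ, …` can
be continued forever: having gone from `d ∈ Δ` to `Γ`, it moves on to a vertex of `Δ` that is
`e_{Δ,Γ}`-equivalent but not `e_{Δ,Λ}`-equivalent to `d`, and from there to a vertex of `Λ` not
adjacent to `d`; then likewise with `Γ` and `Λ` exchanged. No `aₙ ~ aₙ₊₃` arises, so the
relations are comparable.
-/

section CycleGraph

variable {V : Type*} {X : SimpleGraph V} {a : ℕ → V}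

theorem cycleGraph_adj_iff_of_lt {n : ℕ} {j k : Fin (n + 1)} (hjk : j < k) :
    (cycleGraph (n + 1)).Adj j k ↔ k.val = j.val + 1 ∨ j.val = 0 ∧ k.val = n := by
  rw [cycleGraph_adj', Fin.sub_val_of_le hjk.le, Fin.coe_sub_iff_lt.mpr hjk]
  omega

theorem nonempty_cycleGraph_embedding {n : ℕ}
    (hne : ∀ j k, j < k → k ≤ n → a j ≠ a k)
    (hadj : ∀ j k, j < k → k ≤ n → (X.Adj (a j) (a k) ↔ k = j + 1 ∨ j = 0 ∧ k = n)) :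
    Nonempty (cycleGraph (n + 1) ↪g X) := by
  have hadj_of_lt {j k : Fin (n + 1)} (hjk : j < k) :
      X.Adj (a j) (a k) ↔ (cycleGraph (n + 1)).Adj j k :=
    (hadj j k hjk k.is_le).trans (cycleGraph_adj_iff_of_lt hjk).symm
  refine ⟨⟨⟨fun j => a j, Function.Injective.of_lt_imp_ne fun j k hjk => hne j k hjk k.is_le⟩, ?_⟩⟩
  intro j k
  rcases lt_trichotomy j k with hjk | rfl | hkj
  · exact hadj_of_lt hjk
  · simp
  · exact (X.adj_comm _ _).trans ((hadj_of_lt hkj).trans ((cycleGraph _).adj_comm _ _))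

end CycleGraph

section InfiniteWalk

variable {V : Type*} {X : SimpleGraph V} {a : ℕ → V} (hwalk : ∀ n, X.Adj (a n) (a (n + 1)))
include hwalk

theorem exists_walk_length_eq_of_forall_adj_succ (i d : ℕ) :
    ∃ p : X.Walk (a i) (a (i + d)), p.length = d := by
  induction d with
  | zero => exact ⟨.nil, rfl⟩
  | succ d ih =>
    obtain ⟨p, hp⟩ := ih
    exact ⟨p.concat (hwalk (i + d)), by rw [Walk.length_concat, hp]⟩

theorem not_adj_add_of_even (hbip : X.IsBipartite) (i : ℕ) {d : ℕ} (hd : Even d) :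
    ¬ X.Adj (a i) (a (i + d)) := by
  intro hadj
  obtain ⟨p, hp⟩ := exists_walk_length_eq_of_forall_adj_succ hwalk i d
  have hloop : Even (p.length + 1) :=
    two_colorable_iff_forall_loop_even.mp hbip _ (.cons hadj.symm p)
  rw [hp] at hloop
  exact Nat.even_add_one.mp hloop hd

section NoChordOfLengthThree

variable (hchord : ∀ n, ¬ X.Adj (a n) (a (n + 3)))
include hchord

theorem ne_of_forall_not_adj_add {i j : ℕ} (hij : i < j)
    (hshort : ∀ d, 2 ≤ d → i + d < j → ¬ X.Adj (a i) (a (i + d))) : a i ≠ a j := by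
  intro heq
  obtain ⟨d, rfl⟩ := Nat.exists_eq_add_of_lt hij
  have hback : X.Adj (a i) (a (i + d)) := heq ▸ (hwalk (i + d)).symm
  obtain rfl | rfl | hd : d = 0 ∨ d = 1 ∨ 2 ≤ d := by omega
  · exact X.irrefl hback
  · exact hchord i (heq ▸ hwalk (i + 2))
  · exact hshort d hd (Nat.lt_succ_self _) hback

theorem nonempty_cycleGraph_embedding_of_shortest_chord {i d : ℕ}
    (hadj : X.Adj (a i) (a (i + d)))
    (hshort : ∀ e, 2 ≤ e → e < d → ∀ j, ¬ X.Adj (a j) (a (j + e))) :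
    Nonempty (cycleGraph (d + 1) ↪g X) := by
  refine nonempty_cycleGraph_embedding (a := fun j => a (i + j)) ?_ ?_
  · intro j k hjk hkd
    exact ne_of_forall_not_adj_add hwalk hchord (by omega) fun e he hlt =>
      hshort e he (by omega) _
  · intro j k hjk hkd
    refine ⟨fun h => ?_, ?_⟩
    · by_contra! hcon
      obtain ⟨e, rfl⟩ := Nat.exists_eq_add_of_le hjk.le
      exact hshort e (by omega) (by omega) (i + j) (by rwa [add_assoc])
    · rintro (rfl | ⟨rfl, rfl⟩)
      exacts [hwalk (i + j), hadj]

theorem NoLongInducedCycle.not_adj_add (hX : NoLongInducedCycle X) (hbip : X.IsBipartite)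
    {d : ℕ} (hd : 2 ≤ d) (i : ℕ) : ¬ X.Adj (a i) (a (i + d)) := by
  induction d using Nat.strong_induction_on generalizing i with
  | _ d ih =>
    rcases Nat.even_or_odd' d with ⟨k, rfl | rfl⟩
    · exact not_adj_add_of_even hwalk hbip i (even_two_mul k)
    · obtain rfl | hk : k = 1 ∨ 2 ≤ k := by omega
      · exact hchord i
      · intro hadj
        obtain ⟨f⟩ := nonempty_cycleGraph_embedding_of_shortest_chord hwalk hchord hadj
          fun e he hlt j => ih e hlt he j
        exact (hX _ (by omega)).false f

end NoChordOfLengthThree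

theorem NoLongInducedCycle.exists_adj_add_three [Finite V] (hX : NoLongInducedCycle X)
    (hbip : X.IsBipartite) : ∃ n, X.Adj (a n) (a (n + 3)) := by
  by_contra! hchord
  exact not_injective_infinite_finite a <| Function.Injective.of_lt_imp_ne fun _ _ hij =>
    ne_of_forall_not_adj_add hwalk hchord hij fun _ hd _ =>
      hX.not_adj_add hwalk hchord hbip hd _

end InfiniteWalk

theorem NoLongInducedCycle.exists_triple_forall_adj {V : Type*} [Finite V] {X : SimpleGraph V}
    (hX : NoLongInducedCycle X) (hbip : X.IsBipartite) {T : V → V → V → Prop}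
    (hT : ∀ {x y z}, T x y z → X.Adj x y) {x₀ y₀ z₀ : V} (h₀ : T x₀ y₀ z₀) :
    ∃ x y z, T x y z ∧ ∀ w, T y z w → X.Adj x w := by
  by_contra! hext
  choose next hnext hnot_adj using hext
  let shift (t : {t : V × V × V // T t.1 t.2.1 t.2.2}) :
      {t : V × V × V // T t.1 t.2.1 t.2.2} :=
    ⟨(t.1.2.1, t.1.2.2, next _ _ _ t.2), hnext _ _ _ t.2⟩
  let triple (n : ℕ) : {t : V × V × V // T t.1 t.2.1 t.2.2} :=
    n.rec ⟨(x₀, y₀, z₀), h₀⟩ fun _ => shift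
  obtain ⟨n, hn⟩ := hX.exists_adj_add_three (a := fun n => (triple n).1.1)
    (fun n => hT (triple n).2) hbip
  exact hnot_adj _ _ _ (triple n).2 hn

theorem IsBipartition.isBipartite {V : Type*} {X : SimpleGraph V} {P Q : Set V}
    (h : IsBipartition X P Q) : X.IsBipartite :=
  IsBipartiteWith.isBipartite ⟨h.2.1, h.2.2⟩

theorem mem_eRel_iff {V : Type*} {X : SimpleGraph V} {Δ Γ : Set V} {x z : V} :
    (x, z) ∈ eRel X Δ Γ ↔ x ∈ Δ ∧ z ∈ Δ ∧ ∀ w ∈ Γ, X.Adj x w ↔ X.Adj z w := by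
  simp only [eRel, Set.mem_ofPred_eq, Set.ext_iff, Set.mem_inter_iff, mem_neighborSet,
    and_congr_left_iff]

namespace CoherentConfiguration

variable {Ω : Type*} {C : CoherentConfiguration Ω} {X : SimpleGraph Ω} {Δ Γ A B : Set Ω}

/-- Two pairs have the same color if they lie in a common basis relation of the coherent
configuration, the basis relations being viewed as the color classes of `Ω × Ω`. -/
def SameColor (C : CoherentConfiguration Ω) (p q : Ω × Ω) : Prop :=
  ∃ s ∈ C.S, p ∈ s ∧ q ∈ s

theorem IsFiber.sameColor (hΓ : C.IsFiber Γ) {x x' : Ω} (hx : x ∈ Γ) (hx' : x' ∈ Γ) :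
    C.SameColor (x, x) (x', x') :=
  ⟨_, hΓ, ⟨rfl, hx⟩, ⟨rfl, hx'⟩⟩

theorem IsFiber.nonempty_s9 (hΓ : C.IsFiber Γ) : Γ.Nonempty :=
  let ⟨p, hp⟩ := C.nonempty_mem _ hΓ
  ⟨p.1, hp.2⟩

namespace SameColor

variable {x z x' z' : Ω}

theorem symm {p q : Ω × Ω} (h : C.SameColor p q) : C.SameColor q p :=
  let ⟨s, hs, hp, hq⟩ := h
  ⟨s, hs, hq, hp⟩

theorem swap (h : C.SameColor (x, z) (x', z')) : C.SameColor (z, x) (z', x') :=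
  let ⟨s, hs, hp, hq⟩ := h
  ⟨_, C.converse_mem s hs, hp, hq⟩

theorem adj (h : C.SameColor (x, z) (x', z')) (hX : C.Compatible X) (hadj : X.Adj x z) :
    X.Adj x' z' :=
  let ⟨s, hs, hp, hq⟩ := h
  hX s hs ⟨_, hp, hadj⟩ _ hq

theorem eq_of_diag (h : C.SameColor (x, x) (x', z')) : x' = z' :=
  let ⟨s, hs, hp, hq⟩ := h
  C.diag_union s hs ⟨_, hp, rfl⟩ _ hq

variable [Finite Ω]

theorem exists_third (h : C.SameColor (x, z) (x', z')) (y : Ω) :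
    ∃ y', C.SameColor (x, y) (x', y') ∧ C.SameColor (y, z) (y', z') := by
  obtain ⟨t, ht, hxz, hxz'⟩ := h
  obtain ⟨r, ⟨hr, hxy⟩, -⟩ := C.partition (x, y)
  obtain ⟨s, ⟨hs, hyz⟩, -⟩ := C.partition (y, z)
  have hcard := C.regularity r hr s hs t ht _ hxz _ hxz'
  have hpos : {γ | (x, γ) ∈ r ∧ (γ, z) ∈ s}.ncard ≠ 0 :=
    Set.ncard_ne_zero_of_mem (a := y) ⟨hxy, hyz⟩
  obtain ⟨y', hxy', hyz'⟩ := Set.nonempty_of_ncard_ne_zero (hcard ▸ hpos)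
  exact ⟨y', ⟨r, hr, hxy, hxy'⟩, ⟨s, hs, hyz, hyz'⟩⟩

theorem right_mem (h : C.SameColor (x, z) (x', z')) (hΓ : C.IsFiber Γ) (hz : z ∈ Γ) :
    z' ∈ Γ := by
  obtain ⟨y', -, hdiag⟩ := h.exists_third z
  obtain rfl := hdiag.eq_of_diag
  obtain ⟨s, hs, hzs, hzs'⟩ := hdiag
  obtain rfl := (C.partition (z, z)).unique ⟨hs, hzs⟩ ⟨hΓ, rfl, hz⟩
  exact hzs'.2

theorem forall_adj_imp (h : C.SameColor (x, z) (x', z')) (hX : C.Compatible X)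
    (hΓ : C.IsFiber Γ) (hsub : ∀ w ∈ Γ, X.Adj x w → X.Adj z w) :
    ∀ w ∈ Γ, X.Adj x' w → X.Adj z' w := by
  intro w' hw' hadj
  obtain ⟨w, hxw, hwz⟩ := h.symm.exists_third w'
  have hzw : X.Adj z w := hsub w (hxw.right_mem hΓ hw') (hxw.adj hX hadj)
  exact (hwz.symm.adj hX hzw.symm).symm

theorem mem_eRel (h : C.SameColor (x, z) (x', z')) (hX : C.Compatible X)
    (hΔ : C.IsFiber Δ) (hΓ : C.IsFiber Γ) (hxz : (x, z) ∈ eRel X Δ Γ) :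
    (x', z') ∈ eRel X Δ Γ := by
  obtain ⟨hx, hz, hiff⟩ := mem_eRel_iff.mp hxz
  refine mem_eRel_iff.mpr ⟨h.swap.right_mem hΔ hx, h.right_mem hΔ hz, fun w hw => ⟨?_, ?_⟩⟩
  · exact h.forall_adj_imp hX hΓ (fun w hw => (hiff w hw).mp) w hw
  · exact h.swap.forall_adj_imp hX hΓ (fun w hw => (hiff w hw).mpr) w hw

end SameColor

variable [Finite Ω]

theorem IsFiber.forall_adj_of_forall_adj_imp (hX : C.Compatible X) (hΔ : C.IsFiber Δ)
    (hΓ : C.IsFiber Γ) {x z : Ω} (hx : x ∈ Δ) (hz : z ∈ Δ)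
    (hsub : ∀ w ∈ Γ, X.Adj x w → X.Adj z w) :
    ∀ w ∈ Γ, X.Adj z w → X.Adj x w := by
  obtain ⟨m, hm, hmax⟩ :=
    (Set.toFinite Δ).exists_maximalFor (fun v => X.neighborSet v ∩ Γ) Δ hΔ.nonempty_s9
  obtain ⟨m', hcol, -⟩ := (hΔ.sameColor hx hm).exists_third z
  have hle : X.neighborSet m ∩ Γ ⊆ X.neighborSet m' ∩ Γ := fun w hw =>
    ⟨hcol.forall_adj_imp hX hΓ hsub w hw.2 hw.1, hw.2⟩
  have hge := hmax (hcol.right_mem hΔ hz) hle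
  exact hcol.symm.swap.forall_adj_imp hX hΓ fun w hw hadj => (hge ⟨hadj, hw⟩).1

theorem IsFiber.exists_adj_not_adj (hX : C.Compatible X) (hΔ : C.IsFiber Δ)
    (hΓ : C.IsFiber Γ) {x z : Ω} (hx : x ∈ Δ) (hz : z ∈ Δ) (hxz : (x, z) ∉ eRel X Δ Γ) :
    ∃ w ∈ Γ, X.Adj z w ∧ ¬ X.Adj x w := by
  by_contra! hsub
  exact hxz <| mem_eRel_iff.mpr ⟨hx, hz, fun w hw =>
    ⟨hΔ.forall_adj_of_forall_adj_imp hX hΓ hz hx hsub w hw, hsub w hw⟩⟩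

theorem IsFiber.mem_eRel_of_adj (hX : C.Compatible X) (hbip : X.IsBipartite)
    (hchordal : NoLongInducedCycle X) (hΔ : C.IsFiber Δ) (hΓ : C.IsFiber Γ) {x y z : Ω}
    (hx : x ∈ Δ) (hy : y ∈ Γ) (hz : z ∈ Δ) (hxy : X.Adj x y) (hyz : X.Adj y z) :
    (x, z) ∈ eRel X Δ Γ := by
  by_contra hxz
  obtain ⟨x, y, z, ⟨hxy, hyz, A, B, hA, hB, hx, hy, hz, hxz⟩, hend⟩ :=
    hchordal.exists_triple_forall_adj hbip
      (T := fun x y z => X.Adj x y ∧ X.Adj y z ∧ ∃ A B, C.IsFiber A ∧ C.IsFiber B ∧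
        x ∈ A ∧ y ∈ B ∧ z ∈ A ∧ (x, z) ∉ eRel X A B)
      And.left ⟨hxy, hyz, Δ, Γ, hΔ, hΓ, hx, hy, hz, hxz⟩
  obtain ⟨w, hw, hzw, hxw⟩ := hA.exists_adj_not_adj hX hB hx hz hxz
  have hyw : (y, w) ∉ eRel X B A := fun h =>
    hxw (((mem_eRel_iff.mp h).2.2 x hx).mp hxy.symm).symm
  exact hxw (hend w ⟨hyz, hzw, B, A, hB, hA, hy, hz, hw, hyw⟩)

theorem IsFiber.exists_mem_eRel_notMem_eRel (hX : C.Compatible X) (hΔ : C.IsFiber Δ)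
    (hA : C.IsFiber A) (hB : C.IsFiber B) (hAB : ¬ eRel X Δ A ⊆ eRel X Δ B) {y : Ω}
    (hy : y ∈ Δ) : ∃ d, (y, d) ∈ eRel X Δ A ∧ (y, d) ∉ eRel X Δ B := by
  obtain ⟨⟨u, v⟩, huvA, huvB⟩ := Set.not_subset.mp hAB
  obtain ⟨d, hcol, -⟩ := (hΔ.sameColor huvA.1 hy).exists_third v
  exact ⟨d, hcol.mem_eRel hX hΔ hA huvA, fun h => huvB (hcol.symm.mem_eRel hX hΔ hB h)⟩

theorem IsFiber.exists_adj_of_not_eRel_subset (hX : C.Compatible X) (hΔ : C.IsFiber Δ)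
    (hA : C.IsFiber A) (hB : C.IsFiber B) (hAB : ¬ eRel X Δ A ⊆ eRel X Δ B) {y : Ω}
    (hy : y ∈ Δ) : ∃ b ∈ B, X.Adj y b := by
  obtain ⟨d, hydA, hydB⟩ := hΔ.exists_mem_eRel_notMem_eRel hX hA hB hAB hy
  have hne : (d, y) ∉ eRel X Δ B := fun h => hydB ⟨h.2.1, h.1, h.2.2.symm⟩
  obtain ⟨b, hb, hyb, -⟩ := hΔ.exists_adj_not_adj hX hB hydA.2.1 hy hne
  exact ⟨b, hb, hyb⟩

end CoherentConfiguration

theorem stmt_9_general {Ω : Type*} [Finite Ω] {X : SimpleGraph Ω} (hbip : X.IsBipartite)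
    (hchordal : NoLongInducedCycle X) {C : CoherentConfiguration Ω} (hcomp : C.Compatible X)
    {Δ Γ Λ : Set Ω} (hΔ : C.IsFiber Δ) (hΓ : C.IsFiber Γ) (hΛ : C.IsFiber Λ) :
    eRel X Δ Γ ⊆ eRel X Δ Λ ∨ eRel X Δ Λ ⊆ eRel X Δ Γ := by
  by_contra! ⟨hΓΛ, hΛΓ⟩
  obtain ⟨d₀, hd₀⟩ := hΔ.nonempty_s9
  obtain ⟨g₀, hg₀, hdg₀⟩ := hΔ.exists_adj_of_not_eRel_subset hcomp hΛ hΓ hΛΓ hd₀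
  obtain ⟨l₀, hl₀, hdl₀⟩ := hΔ.exists_adj_of_not_eRel_subset hcomp hΓ hΛ hΓΛ hd₀
  obtain ⟨x, y, z, ⟨hxy, hyz, A, B, hA, hB, ⟨hAB, hBA⟩, htype⟩, hend⟩ :=
    hchordal.exists_triple_forall_adj hbip
      (T := fun x y z => X.Adj x y ∧ X.Adj y z ∧ ∃ A B, C.IsFiber A ∧ C.IsFiber B ∧
        IncompRel (· ⊆ ·) (eRel X Δ A) (eRel X Δ B) ∧
          (x ∈ A ∧ y ∈ Δ ∧ z ∈ B ∨ x ∈ Δ ∧ y ∈ A ∧ z ∈ Δ ∧ (x, z) ∉ eRel X Δ B))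
      And.left ⟨hdg₀.symm, hdl₀, Γ, Λ, hΓ, hΛ, ⟨hΓΛ, hΛΓ⟩, .inl ⟨hg₀, hd₀, hl₀⟩⟩
  rcases htype with ⟨hx, hy, hz⟩ | ⟨hx, hy, hz, hxz⟩
  · obtain ⟨d, hydB, hydA⟩ := hΔ.exists_mem_eRel_notMem_eRel hcomp hB hA hBA hy
    have hzd : X.Adj z d := (((mem_eRel_iff.mp hydB).2.2 z hz).mp hyz).symm
    have hxd := hend d ⟨hyz, hzd, B, A, hB, hA, ⟨hBA, hAB⟩, .inr ⟨hy, hz, hydB.2.1, hydA⟩⟩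
    exact hydA (hΔ.mem_eRel_of_adj hcomp hbip hchordal hA hy hx hydB.2.1 hxy.symm hxd)
  · obtain ⟨w, hw, hzw, hxw⟩ := hΔ.exists_adj_not_adj hcomp hB hx hz hxz
    exact hxw (hend w ⟨hyz, hzw, A, B, hA, hB, ⟨hAB, hBA⟩, .inl ⟨hy, hz, hw⟩⟩)

theorem stmt_9 {Ω : Type*} [Fintype Ω] (X : SimpleGraph Ω) (P Q : Set Ω)
    (hconn : X.Connected) (hbip : IsBipartition X P Q) (hchordal : NoLongInducedCycle X)
    (α : Ω) (C : CoherentConfiguration Ω)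
    (hcomp : C.Compatible X) (hdist : C.Distinguished α)
    (Δ : Set Ω) (hΔ : C.IsFiber Δ) :
    ∀ Γ Λ : Set Ω, C.IsFiber Γ → C.IsFiber Λ → Γ ≠ Δ → Λ ≠ Δ →
      eRel X Δ Γ ⊆ eRel X Δ Λ ∨ eRel X Δ Λ ⊆ eRel X Δ Γ :=
  fun _ _ hΓ hΛ _ _ => stmt_9_general hbip.isBipartite hchordal hcomp hΔ hΓ hΛ
end

section
/- Let X be a connected chordal bipartite T_2-free graph, let α be a vertex of X, and let (Ω,S) be a coherent configuration on the vertex set Ω of X compatible with X in which α is distinguished. Then for all distinct fibers Δ and Γ of (Ω,S), ‖e_{Δ,Γ}‖ ≤ 2. -/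
open SimpleGraph

/-- The bipartite claw `T₂`: the tree on 7 vertices obtained from the star `K_{1,3}`
by subdividing each edge once (center 0, middle vertices 1,2,3, leaves 4,5,6). -/
def bipartiteClaw : SimpleGraph (Fin 7) :=
  SimpleGraph.fromRel (fun a b =>
    (a, b) ∈ ({(0, 1), (0, 2), (0, 3), (1, 4), (2, 5), (3, 6)} : Set (Fin 7 × Fin 7)))

/-- `X` contains no induced subgraph isomorphic to the bipartite claw `T₂`. -/
def T2Free {V : Type*} (X : SimpleGraph V) : Prop :=
  IsEmpty (bipartiteClaw ↪g X)

/-!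
The fibers of a coherent configuration compatible with `X` form an equitable partition of `X`, and
when `{α}` is a cell of an equitable partition of a connected graph, all vertices of a cell are at
the same distance from `α`. So, in a bipartite graph, cells are independent sets.

The graph between two cells `Δ` and `Γ` is a disjoint union of complete bipartite graphs:
otherwise it contains an induced path on four vertices, and since all vertices on one side have
the same degree, induced paths could be prolonged indefinitely without closing a long induced
cycle. Hence three classes of `e_{Δ,Γ}` yield three edges `l i — u i` forming an induced matching,
with, say, the `l i` closer to `α`. The `l i` have neighbors in a common cell `Λ` one level closer
to `α`. If no vertex of `Λ` is adjacent to two of the `l i`, there is an induced matching of size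
three between `Λ` and `Δ`, and we descend; this must stop before reaching the singleton `{α}`. A
vertex of `Λ` adjacent to two or to all three of the `l i` is the center of an induced `T₂`.
-/

namespace CoherentConfiguration

variable {Ω : Type*} {C : CoherentConfiguration Ω} {X : SimpleGraph Ω} {R R' : Set (Ω × Ω)}
  {Δ Γ : Set Ω} {u v : Ω}

/-- `R` is a relation of the coherent configuration `C`, i.e. a union of elements of `C.S`;
encoded by saying that every element of `C.S` meeting `R` is contained in `R`. -/
def IsRelation (C : CoherentConfiguration Ω) (R : Set (Ω × Ω)) : Prop :=
  ∀ s ∈ C.S, (s ∩ R).Nonempty → s ⊆ R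

theorem IsRelation.inter (hR : C.IsRelation R) (hR' : C.IsRelation R') :
    C.IsRelation (R ∩ R') := fun s hs ⟨p, hps, hpR, hpR'⟩ =>
  Set.subset_inter (hR s hs ⟨p, hps, hpR⟩) (hR' s hs ⟨p, hps, hpR'⟩)

theorem Compatible.isRelation_adj (hcomp : C.Compatible X) :
    C.IsRelation {p | X.Adj p.1 p.2} := hcomp

theorem eq_of_mem_of_mem {s t : Set (Ω × Ω)} {p : Ω × Ω} (hs : s ∈ C.S) (ht : t ∈ C.S)
    (hps : p ∈ s) (hpt : p ∈ t) : s = t :=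
  (C.partition p).unique ⟨hs, hps⟩ ⟨ht, hpt⟩

theorem isPartition_fibers (C : CoherentConfiguration Ω) :
    Setoid.IsPartition {Δ | C.IsFiber Δ} := by
  refine ⟨fun h => ?_, fun x => ?_⟩
  · obtain ⟨p, -, hp⟩ := C.nonempty_mem _ h
    exact hp
  · obtain ⟨s, ⟨hs, hxs⟩, -⟩ := C.partition (x, x)
    have hdiag : {p : Ω × Ω | p.1 = p.2 ∧ p.1 ∈ {y | (y, y) ∈ s}} = s := by
      ext ⟨a, b⟩
      constructor
      · rintro ⟨rfl : a = b, has⟩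
        exact has
      · intro hab
        obtain rfl : a = b := C.diag_union s hs ⟨_, hxs, rfl⟩ _ hab
        exact ⟨rfl, hab⟩
    have hfiber : C.IsFiber {y | (y, y) ∈ s} := by rwa [IsFiber, hdiag]
    refine ⟨{y | (y, y) ∈ s}, ⟨hfiber, hxs⟩, ?_⟩
    rintro Δ ⟨hΔ, hxΔ⟩
    have hsΔ := eq_of_mem_of_mem hs hΔ hxs ⟨rfl, hxΔ⟩
    ext y
    simp [hsΔ]

theorem Distinguished.isFiber_singleton {α : Ω} (h : C.Distinguished α) : C.IsFiber {α} := by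
  have hdiag : {p : Ω × Ω | p.1 = p.2 ∧ p.1 ∈ ({α} : Set Ω)} = {(α, α)} := by
    ext ⟨a, b⟩
    simp only [Set.mem_ofPred_eq, Set.mem_singleton_iff, Prod.mk.injEq]
    grind
  rwa [IsFiber, hdiag]

theorem IsFiber.isRelation_univ_prod [Finite Ω] (hΓ : C.IsFiber Γ) :
    C.IsRelation (Set.univ ×ˢ Γ) := by
  rintro s hs ⟨⟨a, b⟩, hab, -, hb : b ∈ Γ⟩ ⟨a', b'⟩ hab'
  have hcount := C.regularity s hs _ hΓ s hs _ hab _ hab'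
  have hpos : 0 < {γ | (a, γ) ∈ s ∧ γ = b ∧ γ ∈ Γ}.ncard :=
    (Set.ncard_pos (Set.toFinite _)).2 ⟨b, hab, rfl, hb⟩
  obtain ⟨γ, -, hγb' : γ = b', hγ⟩ :=
    (Set.ncard_pos (Set.toFinite _)).1 (hpos.trans_eq hcount)
  exact ⟨trivial, hγb' ▸ hγ⟩

theorem IsFiber.ncard_section_eq_of_mem {s : Set (Ω × Ω)} (hΔ : C.IsFiber Δ) (hs : s ∈ C.S)
    (hu : u ∈ Δ) (hv : v ∈ Δ) : {γ | (u, γ) ∈ s}.ncard = {γ | (v, γ) ∈ s}.ncard := by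
  simpa using C.regularity s hs _ (C.converse_mem s hs) _ hΔ (u, u) ⟨rfl, hu⟩ (v, v) ⟨rfl, hv⟩

theorem IsRelation.section_eq_biUnion (hR : C.IsRelation R) (x : Ω) :
    {γ | (x, γ) ∈ R} = ⋃ s ∈ {s ∈ C.S | s ⊆ R}, {γ | (x, γ) ∈ s} := by
  ext γ
  simp only [Set.mem_iUnion, Set.mem_ofPred_eq, exists_prop]
  constructor
  · intro hγ
    obtain ⟨s, ⟨hs, hγs⟩, -⟩ := C.partition (x, γ)
    exact ⟨s, ⟨hs, hR s hs ⟨_, hγs, hγ⟩⟩, hγs⟩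
  · rintro ⟨s, ⟨-, hsR⟩, hγs⟩
    exact hsR hγs

theorem IsRelation.ncard_section_eq [Finite Ω] (hR : C.IsRelation R) (hΔ : C.IsFiber Δ)
    (hu : u ∈ Δ) (hv : v ∈ Δ) : {γ | (u, γ) ∈ R}.ncard = {γ | (v, γ) ∈ R}.ncard := by
  have hdisjoint (x : Ω) : {s ∈ C.S | s ⊆ R}.PairwiseDisjoint fun s => {γ | (x, γ) ∈ s} :=
    fun s hs t ht hst => Set.disjoint_left.2 fun γ hγs hγt =>
      hst (eq_of_mem_of_mem hs.1 ht.1 hγs hγt)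
  have hncard (x : Ω) :
      {γ | (x, γ) ∈ R}.ncard = ∑ᶠ s ∈ {s ∈ C.S | s ⊆ R}, {γ | (x, γ) ∈ s}.ncard := by
    rw [hR.section_eq_biUnion, Set.Finite.ncard_biUnion (Set.toFinite _)
      (fun _ _ => Set.toFinite _) (hdisjoint x)]
  rw [hncard, hncard]
  exact finsum_mem_congr rfl fun s hs => hΔ.ncard_section_eq_of_mem hs.1 hu hv

end CoherentConfiguration

section Distance

variable {V : Type*} {X : SimpleGraph V} {α u v : V}

theorem dist_le_add_one_of_adj (huv : X.Adj u v) : X.dist α v ≤ X.dist α u + 1 := by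
  have := huv.diff_dist_adj (u := α)
  omega

theorem exists_adj_dist_add_one_eq (hconn : X.Connected) (hv : v ≠ α) :
    ∃ w, X.Adj v w ∧ X.dist α w + 1 = X.dist α v := by
  obtain ⟨p, hp⟩ := hconn.exists_walk_length_eq_dist v α
  cases p with
  | nil => exact absurd rfl hv
  | @cons _ w _ hvw q =>
    refine ⟨w, hvw, le_antisymm ?_ (dist_le_add_one_of_adj hvw.symm)⟩
    rw [dist_comm (u := α), dist_comm (u := α), ← hp, Walk.length_cons]
    exact Nat.add_le_add_right (dist_le q) 1

theorem dist_ne_of_adj (hconn : X.Connected) (hbip : X.IsBipartite) (huv : X.Adj u v) :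
    X.dist α u ≠ X.dist α v := by
  let c : X.Coloring Bool := hbip.toColoring (by simp)
  obtain ⟨p, hp⟩ := hconn.exists_walk_length_eq_dist α u
  obtain ⟨q, hq⟩ := hconn.exists_walk_length_eq_dist α v
  intro hdist
  have hparity : (c α ↔ c u) ↔ (c α ↔ c v) := by
    rw [← c.even_length_iff_congr p, ← c.even_length_iff_congr q, hp, hq, hdist]
  have hcolor : c u ≠ c v := c.valid huv
  grind

-- `m` is a neighbor of `c` closer to `α`; if `m ≠ α`, then `k` can be taken closer still, and
-- otherwise both `c` and `c'` are neighbors of `α = m`.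
theorem exists_adj_adj_of_dist_eq (hconn : X.Connected) {c c' : V} (hne : c ≠ c')
    (hdist : X.dist α c = X.dist α c') :
    ∃ m k, X.Adj c m ∧ X.Adj m k ∧ X.dist α m < X.dist α c ∧
      (k = c' ∨ X.dist α k < X.dist α m) := by
  have hcα : c ≠ α := by
    rintro rfl
    rw [dist_self] at hdist
    exact hne (hconn.dist_eq_zero_iff.1 hdist.symm)
  obtain ⟨m, hcm, hm⟩ := exists_adj_dist_add_one_eq hconn hcα
  by_cases hmα : m = α
  · subst hmα
    rw [dist_self] at hm
    exact ⟨m, c', hcm, dist_eq_one_iff_adj.1 (by omega), by rw [dist_self]; omega, .inl rfl⟩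
  · obtain ⟨k, hmk, hk⟩ := exists_adj_dist_add_one_eq hconn hmα
    exact ⟨m, k, hcm, hmk, by omega, .inr (by omega)⟩

end Distance

/-- An equitable partition of the vertex set of a (finite) graph: any two vertices in the same
cell have equally many neighbors in every cell. -/
structure IsEquitablePartition {V : Type*} (X : SimpleGraph V) (𝓕 : Set (Set V)) : Prop where
  isPartition : Setoid.IsPartition 𝓕
  ncard_neighborSet_inter_eq : ∀ Δ ∈ 𝓕, ∀ Γ ∈ 𝓕, ∀ u ∈ Δ, ∀ v ∈ Δ,
    (X.neighborSet u ∩ Γ).ncard = (X.neighborSet v ∩ Γ).ncard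

theorem CoherentConfiguration.Compatible.isEquitablePartition {Ω : Type*} [Finite Ω]
    {C : CoherentConfiguration Ω} {X : SimpleGraph Ω} (hcomp : C.Compatible X) :
    IsEquitablePartition X {Δ | C.IsFiber Δ} where
  isPartition := C.isPartition_fibers
  ncard_neighborSet_inter_eq Δ hΔ Γ hΓ u hu v hv := by
    have hR := hcomp.isRelation_adj.inter (IsFiber.isRelation_univ_prod hΓ)
    simpa [Set.inter_def] using hR.ncard_section_eq hΔ hu hv

namespace IsEquitablePartition

variable {V : Type*} {X : SimpleGraph V} {𝓕 : Set (Set V)} {Δ Γ Λ : Set V} {α u v w : V}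

theorem exists_mem (h : IsEquitablePartition X 𝓕) (v : V) : ∃ Δ ∈ 𝓕, v ∈ Δ :=
  (h.isPartition.2 v).exists

theorem eq_of_singleton_mem (h : IsEquitablePartition X 𝓕) (hα : {α} ∈ 𝓕) (hΔ : Δ ∈ 𝓕)
    (hαΔ : α ∈ Δ) : Δ = {α} :=
  (h.isPartition.2 α).unique ⟨hΔ, hαΔ⟩ ⟨hα, rfl⟩

variable [Finite V]

theorem ncard_neighborSet_inter_union_eq (h : IsEquitablePartition X 𝓕) (hΔ : Δ ∈ 𝓕)
    (hΓ : Γ ∈ 𝓕) (hΛ : Λ ∈ 𝓕) (hu : u ∈ Λ) (hv : v ∈ Λ) :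
    (X.neighborSet u ∩ (Δ ∪ Γ)).ncard = (X.neighborSet v ∩ (Δ ∪ Γ)).ncard := by
  by_cases hΔΓ : Δ = Γ
  · rw [hΔΓ, Set.union_self, h.ncard_neighborSet_inter_eq Λ hΛ Γ hΓ u hu v hv]
  · have hdisj : Disjoint Δ Γ := h.isPartition.pairwiseDisjoint hΔ hΓ hΔΓ
    have hsplit (x : V) : (X.neighborSet x ∩ (Δ ∪ Γ)).ncard =
        (X.neighborSet x ∩ Δ).ncard + (X.neighborSet x ∩ Γ).ncard := by
      rw [Set.inter_union_distrib_left, Set.ncard_union_eq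
        (hdisj.mono Set.inter_subset_right Set.inter_subset_right)]
    rw [hsplit, hsplit, h.ncard_neighborSet_inter_eq Λ hΛ Δ hΔ u hu v hv,
      h.ncard_neighborSet_inter_eq Λ hΛ Γ hΓ u hu v hv]

theorem exists_mem_adj (h : IsEquitablePartition X 𝓕) (hΔ : Δ ∈ 𝓕) (hΓ : Γ ∈ 𝓕)
    (hu : u ∈ Δ) (hv : v ∈ Δ) (hw : w ∈ Γ) (huw : X.Adj u w) : ∃ w' ∈ Γ, X.Adj v w' := by
  have hpos : 0 < (X.neighborSet u ∩ Γ).ncard := (Set.ncard_pos (Set.toFinite _)).2 ⟨w, huw, hw⟩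
  rw [h.ncard_neighborSet_inter_eq Δ hΔ Γ hΓ u hu v hv] at hpos
  obtain ⟨w', hvw', hw'⟩ := (Set.ncard_pos (Set.toFinite _)).1 hpos
  exact ⟨w', hw', hvw'⟩

theorem dist_eq_of_mem (h : IsEquitablePartition X 𝓕) (hα : {α} ∈ 𝓕) (hconn : X.Connected)
    (hΔ : Δ ∈ 𝓕) (hu : u ∈ Δ) (hv : v ∈ Δ) : X.dist α u = X.dist α v := by
  suffices hle : ∀ n, ∀ Δ ∈ 𝓕, ∀ u ∈ Δ, ∀ v ∈ Δ, X.dist α u = n → X.dist α v ≤ n from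
    le_antisymm (hle _ Δ hΔ v hv u hu rfl) (hle _ Δ hΔ u hu v hv rfl)
  intro n
  induction n with
  | zero =>
    intro Δ hΔ u hu v hv hdist
    obtain rfl := hconn.dist_eq_zero_iff.1 hdist
    obtain rfl : v = α := by rwa [h.eq_of_singleton_mem hα hΔ hu] at hv
    exact dist_self.le
  | succ n ih =>
    intro Δ hΔ u hu v hv hdist
    have hne : u ≠ α := by
      rintro rfl
      simp at hdist
    obtain ⟨w, huw, hw⟩ := exists_adj_dist_add_one_eq hconn hne
    obtain ⟨Γ, hΓ, hwΓ⟩ := h.exists_mem w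
    obtain ⟨w', hw'Γ, hvw'⟩ := h.exists_mem_adj hΔ hΓ hu hv hwΓ huw
    have hw' := ih Γ hΓ w hwΓ w' hw'Γ (by omega)
    exact (dist_le_add_one_of_adj hvw'.symm).trans (by omega)

theorem not_adj_of_mem (h : IsEquitablePartition X 𝓕) (hα : {α} ∈ 𝓕) (hconn : X.Connected)
    (hbip : X.IsBipartite) (hΔ : Δ ∈ 𝓕) (hu : u ∈ Δ) (hv : v ∈ Δ) : ¬X.Adj u v := fun huv =>
  dist_ne_of_adj hconn hbip huv (h.dist_eq_of_mem hα hconn hΔ hu hv)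

end IsEquitablePartition


section ChordalBipartite

variable {V : Type*} {X : SimpleGraph V} {n : ℕ} {w : V}

theorem NoLongInducedCycle.induce (hch : NoLongInducedCycle X) (W : Set V) :
    NoLongInducedCycle (X.induce W) := fun n hn =>
  ⟨fun f => (hch n hn).false ((Embedding.induce W).comp f)⟩

theorem nonempty_embedding_cons {G : SimpleGraph (Fin (n + 1))} {H : SimpleGraph (Fin n)}
    (f : H ↪g X) (hw : w ∉ Set.range f) (hzero : ∀ i, G.Adj 0 (Fin.succ i) ↔ X.Adj w (f i))
    (hsucc : ∀ i j, G.Adj (Fin.succ i) (Fin.succ j) ↔ H.Adj i j) : Nonempty (G ↪g X) := by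
  refine ⟨⟨⟨Fin.cons w f, Fin.cons_injective_iff.2 ⟨hw, f.injective⟩⟩, fun {a b} => ?_⟩⟩
  cases a using Fin.cases <;> cases b using Fin.cases <;>
    simp [hzero, hsucc, adj_comm G _ 0, adj_comm X _ w]

theorem nonempty_pathGraph_succ_embedding (f : pathGraph n ↪g X) (hw : w ∉ Set.range f)
    (hadj : ∀ i, X.Adj w (f i) ↔ i.val = 0) : Nonempty (pathGraph (n + 1) ↪g X) :=
  nonempty_embedding_cons f hw (fun i => by simp [pathGraph_adj, hadj, eq_comm])
    fun i j => by simp [pathGraph_adj]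

theorem cycleGraph_adj_iff_of_lt_s12 {a b : Fin n} (hab : a < b) :
    (cycleGraph n).Adj a b ↔ a.val + 1 = b.val ∨ a.val = 0 ∧ b.val + 1 = n := by
  rw [cycleGraph_adj', Fin.coe_sub_iff_lt.2 hab, Fin.coe_sub_iff_le.2 hab.le]
  omega

theorem nonempty_cycleGraph_succ_embedding (f : pathGraph n ↪g X) (hw : w ∉ Set.range f)
    (hadj : ∀ i, X.Adj w (f i) ↔ i.val = 0 ∨ i.val + 1 = n) :
    Nonempty (cycleGraph (n + 1) ↪g X) := by
  refine nonempty_embedding_cons f hw (fun i => ?_) fun i j => ?_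
  · rw [cycleGraph_adj_iff_of_lt_s12 i.succ_pos, hadj]
    simp [eq_comm]
  · rw [pathGraph_adj]
    rcases lt_trichotomy i j with hij | rfl | hij
    · rw [cycleGraph_adj_iff_of_lt_s12 (Fin.succ_lt_succ_iff.2 hij)]
      grind
    · simp
    · rw [adj_comm, cycleGraph_adj_iff_of_lt_s12 (Fin.succ_lt_succ_iff.2 hij)]
      grind

/-- The embedding of a path on `m` vertices as the first `m` vertices of a longer path. -/
def pathGraphPrefix {m : ℕ} (h : m ≤ n) : pathGraph m ↪g pathGraph n where
  toEmbedding := Fin.castLEEmb h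
  map_rel_iff' := by simp [pathGraph_adj]

theorem coloring_eq_of_adj_of_adj {u v w : V} (c : X.Coloring Bool) (huv : X.Adj u v)
    (hvw : X.Adj v w) : c u = c w := by
  rw [Bool.eq_not_of_ne (c.valid huv), Bool.eq_not_of_ne (c.valid hvw), Bool.not_not]

-- Otherwise let `f j` be the first neighbor of `w` after `f 0`. Parity excludes `j = 1, 3`, so
-- `w, f 0, …, f j` is an induced cycle of length at least 6.
theorem NoLongInducedCycle.eq_zero_of_adj_path (hch : NoLongInducedCycle X)
    (hbip : X.IsBipartite) (f : pathGraph (n + 4) ↪g X) (hw : w ∉ Set.range f)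
    (h0 : X.Adj w (f 0)) (h2 : ¬X.Adj w (f 2)) {j : Fin (n + 4)} (hj : X.Adj w (f j)) :
    j = 0 := by
  let c : X.Coloring Bool := hbip.toColoring (by simp)
  have hpath (i j : Fin (n + 4)) (hij : i.val + 1 = j.val) : X.Adj (f i) (f j) :=
    f.map_adj_iff.2 (pathGraph_adj.2 (.inl hij))
  have hcolor1 : c w = c (f 1) := coloring_eq_of_adj_of_adj c h0 (hpath 0 1 rfl)
  have hcolor3 : c w = c (f 3) :=
    hcolor1.trans (coloring_eq_of_adj_of_adj c (hpath 1 2 rfl) (hpath 2 3 rfl))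
  induction j using WellFoundedLT.induction with
  | ind j ih =>
    by_contra hne
    have hj0 : j.val ≠ 0 := fun h => hne (Fin.ext h)
    have hj1 : j.val ≠ 1 := fun h => c.valid hj ((Fin.ext h : j = 1) ▸ hcolor1)
    have hj2 : j.val ≠ 2 := fun h => h2 ((Fin.ext h : j = 2) ▸ hj)
    have hj3 : j.val ≠ 3 := fun h => c.valid hj ((Fin.ext h : j = 3) ▸ hcolor3)
    let g : pathGraph (j.val + 1) ↪g X := f.comp (pathGraphPrefix j.isLt)
    have hgw : w ∉ Set.range g := by
      rintro ⟨i, rfl⟩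
      exact hw ⟨_, rfl⟩
    have hadj (i : Fin (j.val + 1)) : X.Adj w (g i) ↔ i.val = 0 ∨ i.val + 1 = j.val + 1 := by
      constructor
      · intro hi
        by_contra! hne
        exact hne.1 (congrArg Fin.val (ih (Fin.castLE j.isLt i) (show i.val < j.val by omega) hi))
      · rintro (hi | hi)
        · rwa [show i = 0 from Fin.ext hi]
        · rwa [show i = Fin.last _ from Fin.ext (Nat.succ_injective hi)]
    obtain ⟨e⟩ := nonempty_cycleGraph_succ_embedding g hgw hadj
    exact (hch _ (by omega)).false e

theorem NoLongInducedCycle.nonempty_longer_pathGraph_embedding (hch : NoLongInducedCycle X)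
    (hbip : X.IsBipartite) (f : pathGraph (n + 4) ↪g X) (h0 : X.Adj w (f 0))
    (h2 : ¬X.Adj w (f 2)) : Nonempty (pathGraph (n + 5) ↪g X) := by
  have hw : w ∉ Set.range f := by
    rintro ⟨i, rfl⟩
    rw [f.map_adj_iff, pathGraph_adj] at h0 h2
    change i.val + 1 = 0 ∨ 0 + 1 = i.val at h0
    change ¬(i.val + 1 = 2 ∨ 2 + 1 = i.val) at h2
    omega
  refine nonempty_pathGraph_succ_embedding f hw fun i => ⟨fun hi => ?_, fun hi => ?_⟩
  · exact congrArg Fin.val (hch.eq_zero_of_adj_path hbip f hw h0 h2 hi)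
  · rwa [show i = 0 from Fin.ext hi]

theorem nonempty_embedding_of_adj_iff {W : Type*} {G : SimpleGraph W}
    (hG : ∀ a b, (∀ c, G.Adj a c ↔ G.Adj b c) → a = b) (φ : W → V)
    (h : ∀ a b, X.Adj (φ a) (φ b) ↔ G.Adj a b) : Nonempty (G ↪g X) := by
  have hφ : φ.Injective := fun a b hab => hG a b fun c => by rw [← h, ← h, hab]
  exact ⟨⟨⟨φ, hφ⟩, h _ _⟩⟩

theorem nonempty_pathGraph_four_embedding (hbip : X.IsBipartite) {u v w z : V}
    (huv : X.Adj u v) (hvw : X.Adj v w) (hwz : X.Adj w z) (huz : ¬X.Adj u z) :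
    Nonempty (pathGraph 4 ↪g X) := by
  let c : X.Coloring Bool := hbip.toColoring (by simp)
  have huw : ¬X.Adj u w := fun h => c.valid h (coloring_eq_of_adj_of_adj c huv hvw)
  have hvz : ¬X.Adj v z := fun h => c.valid h (coloring_eq_of_adj_of_adj c hvw hwz)
  refine nonempty_embedding_of_adj_iff (fun a b => ?_) ![u, v, w, z] fun a b => ?_
  · simp only [pathGraph_adj]
    decide +revert
  · fin_cases a <;> fin_cases b <;> simp [pathGraph_adj, adj_comm, *]

-- Otherwise `u v w z` is an induced path, and any induced path `f` on at least 4 vertices can be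
-- prolonged: `f 3` is a neighbor of `f 2` but not of `f 0`, so conversely `f 0` has a neighbor
-- that is not adjacent to `f 2`.
theorem NoLongInducedCycle.adj_of_adj_adj_adj [Finite V] (hch : NoLongInducedCycle X)
    (hbip : X.IsBipartite)
    (hdeg : ∀ ⦃u v w⦄, X.Adj u v → X.Adj v w →
      (X.neighborSet u).ncard = (X.neighborSet w).ncard)
    {u v w z : V} (huv : X.Adj u v) (hvw : X.Adj v w) (hwz : X.Adj w z) : X.Adj u z := by
  by_contra huz
  have hpath (n : ℕ) : Nonempty (pathGraph (n + 4) ↪g X) := by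
    induction n with
    | zero => exact nonempty_pathGraph_four_embedding hbip huv hvw hwz huz
    | succ n ih =>
      obtain ⟨f⟩ := ih
      have hdeg02 : (X.neighborSet (f 0)).ncard = (X.neighborSet (f 2)).ncard :=
        hdeg (f.map_adj_iff.2 (pathGraph_adj.2 (.inl rfl)) : X.Adj (f 0) (f 1))
          (f.map_adj_iff.2 (pathGraph_adj.2 (.inl rfl)))
      have hnot : ¬X.neighborSet (f 0) ⊆ X.neighborSet (f 2) := by
        intro hsub
        have heq := Set.eq_of_subset_of_ncard_le hsub hdeg02.ge (Set.toFinite _)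
        have h3 : f 3 ∈ X.neighborSet (f 0) := by
          rw [heq]
          exact f.map_adj_iff.2 (pathGraph_adj.2 (.inl rfl))
        rw [mem_neighborSet, f.map_adj_iff, pathGraph_adj] at h3
        change 0 + 1 = 3 ∨ 3 + 1 = 0 at h3
        omega
      obtain ⟨w, h0, h2⟩ := Set.not_subset.1 hnot
      exact hch.nonempty_longer_pathGraph_embedding hbip f (adj_symm X h0) fun h => h2 h.symm
  obtain ⟨f⟩ := hpath (Nat.card V)
  have hcard := Nat.card_le_card_of_injective f f.injective
  rw [Nat.card_fin] at hcard
  omega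

theorem ncard_neighborSet_induce (X : SimpleGraph V) (W : Set V) (u : W) :
    ((X.induce W).neighborSet u).ncard = (X.neighborSet u ∩ W).ncard := by
  rw [← Set.ncard_image_of_injective _ Subtype.val_injective]
  congr 1
  ext v
  simp

theorem IsEquitablePartition.adj_of_adj_adj_adj [Finite V] {𝓕 : Set (Set V)} {Δ Γ : Set V}
    {α u v w z : V} (h : IsEquitablePartition X 𝓕) (hα : {α} ∈ 𝓕) (hconn : X.Connected)
    (hbip : X.IsBipartite) (hch : NoLongInducedCycle X) (hΔ : Δ ∈ 𝓕) (hΓ : Γ ∈ 𝓕)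
    (hu : u ∈ Δ) (hv : v ∈ Γ) (hw : w ∈ Δ) (hz : z ∈ Γ)
    (huv : X.Adj u v) (hvw : X.Adj v w) (hwz : X.Adj w z) : X.Adj u z := by
  let Y : SimpleGraph ↥(Δ ∪ Γ) := X.induce (Δ ∪ Γ)
  have hbipY : Y.IsBipartite := hbip.of_hom (Embedding.induce (Δ ∪ Γ)).toHom
  have hdeg_of_mem {Λ} (hΛ : Λ ∈ 𝓕) {a c : ↥(Δ ∪ Γ)} (ha : ↑a ∈ Λ) (hc : ↑c ∈ Λ) :
      (Y.neighborSet a).ncard = (Y.neighborSet c).ncard := by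
    rw [ncard_neighborSet_induce, ncard_neighborSet_induce,
      h.ncard_neighborSet_inter_union_eq hΔ hΓ hΛ ha hc]
  have hindep {Λ} (hΛ : Λ ∈ 𝓕) {a b : V} (hab : X.Adj a b) (ha : a ∈ Λ) : b ∉ Λ := fun hb =>
    h.not_adj_of_mem hα hconn hbip hΛ ha hb hab
  have hdeg ⦃a b c : ↥(Δ ∪ Γ)⦄ (hab : Y.Adj a b) (hbc : Y.Adj b c) :
      (Y.neighborSet a).ncard = (Y.neighborSet c).ncard := by
    rw [induce_adj] at hab hbc
    rcases b.2 with hb | hb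
    · exact hdeg_of_mem hΓ (a.2.resolve_left (hindep hΔ hab.symm hb))
        (c.2.resolve_left (hindep hΔ hbc hb))
    · exact hdeg_of_mem hΔ (a.2.resolve_right (hindep hΓ hab.symm hb))
        (c.2.resolve_right (hindep hΓ hbc hb))
  exact (hch.induce (Δ ∪ Γ)).adj_of_adj_adj_adj hbipY hdeg
    (u := ⟨u, .inl hu⟩) (v := ⟨v, .inr hv⟩) (w := ⟨w, .inl hw⟩) (z := ⟨z, .inr hz⟩)
    huv hvw hwz

end ChordalBipartite

section InducedMatching

variable {V ι : Type*} {X : SimpleGraph V} {l u : ι → V}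

/-- The edges joining the `l i` to the `u j` are exactly those joining `l i` to `u i`. In a
bipartite graph with the `l i` on one side and the `u i` on the other, this says that the edges
`l i — u i` form an induced matching. -/
def IsInducedMatching (X : SimpleGraph V) (l u : ι → V) : Prop :=
  ∀ i j, X.Adj (l i) (u j) ↔ i = j

namespace IsInducedMatching

theorem adj (h : IsInducedMatching X l u) (i : ι) : X.Adj (l i) (u i) := (h i i).2 rfl

theorem symm (h : IsInducedMatching X l u) : IsInducedMatching X u l := fun i j => by
  rw [adj_comm, h, eq_comm]

theorem comp_injective {κ : Type*} {e : κ → ι} (h : IsInducedMatching X l u)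
    (he : e.Injective) : IsInducedMatching X (l ∘ e) (u ∘ e) := fun i j =>
  (h (e i) (e j)).trans he.eq_iff

theorem cons {n : ℕ} {l u : Fin n → V} {a b : V} (h : IsInducedMatching X l u)
    (hab : X.Adj a b) (ha : ∀ i, ¬X.Adj a (u i)) (hb : ∀ i, ¬X.Adj (l i) b) :
    IsInducedMatching X (Fin.cons a l : Fin (n + 1) → V) (Fin.cons b u : Fin (n + 1) → V) := by
  intro i j
  cases i using Fin.cases <;> cases j using Fin.cases <;>
    simp [hab, ha, hb, h _ _, eq_comm, Fin.succ_ne_zero]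

end IsInducedMatching

theorem bipartiteClaw_eq_of_adj_iff (a b : Fin 7)
    (h : ∀ c, bipartiteClaw.Adj a c ↔ bipartiteClaw.Adj b c) : a = b := by
  fin_cases a <;> fin_cases b <;> revert h <;> simp [bipartiteClaw, Fin.forall_fin_succ]

namespace T2Free

theorem exists_not_adj (hT2 : T2Free X) (hbip : X.IsBipartite) {l u : Fin 3 → V}
    (h : IsInducedMatching X l u) (a : V) : ∃ i, ¬X.Adj a (l i) := by
  by_contra! ha
  let c : X.Coloring Bool := hbip.toColoring (by simp)
  have hau (i) : c a = c (u i) := coloring_eq_of_adj_of_adj c (ha i) (h.adj i)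
  have hla (i) : X.Adj (l i) a := (ha i).symm
  have hll (i j) : ¬X.Adj (l i) (l j) := fun hij =>
    c.valid hij (coloring_eq_of_adj_of_adj c (hla i) (ha j))
  have hnot_au (i) : ¬X.Adj a (u i) := fun hai => c.valid hai (hau i)
  have hnot_ua (i) : ¬X.Adj (u i) a := fun hia => hnot_au i hia.symm
  have huu (i j) : ¬X.Adj (u i) (u j) := fun hij => c.valid hij ((hau i).symm.trans (hau j))
  have hclaw (i j) : X.Adj (![a, l 0, l 1, l 2, u 0, u 1, u 2] i)
      (![a, l 0, l 1, l 2, u 0, u 1, u 2] j) ↔ bipartiteClaw.Adj i j := by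
    fin_cases i <;> fin_cases j <;>
      simp [bipartiteClaw, ha, hla, hll, hnot_au, hnot_ua, huu, h _ _, h.symm _ _]
  obtain ⟨e⟩ := nonempty_embedding_of_adj_iff bipartiteClaw_eq_of_adj_iff _ hclaw
  exact hT2.false e

-- The third leg `c — m — k` of the claw centered at `c` points towards `α`.
theorem exists_adj_of_dist_eq (hT2 : T2Free X) (hbip : X.IsBipartite) (hconn : X.Connected)
    {α c c' : V} {l u : Fin 2 → V} (h : IsInducedMatching X l u) (hne : c ≠ c')
    (hc : X.dist α c = X.dist α c') (hcl : ∀ i, X.Adj c (l i))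
    (hl : ∀ i, X.dist α (l i) = X.dist α c + 1) (hu : ∀ i, X.dist α (u i) = X.dist α c + 2) :
    ∃ i, X.Adj (l i) c' := by
  by_contra! hc'
  obtain ⟨m, k, hcm, hmk, hm, hk⟩ := exists_adj_adj_of_dist_eq hconn hne hc
  have hmu (i) : ¬X.Adj m (u i) := fun hmu => by
    have := dist_le_add_one_of_adj (α := α) hmu
    have := hu i
    omega
  have hlk (i) : ¬X.Adj (l i) k := fun hlk => by
    rcases hk with rfl | hk
    · exact hc' i hlk
    · have := dist_le_add_one_of_adj (α := α) hlk.symm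
      have := hl i
      omega
  obtain ⟨i, hi⟩ := hT2.exists_not_adj hbip (h.cons hmk hmu hlk) c
  cases i using Fin.cases with
  | zero => exact hi hcm
  | succ i => exact hi (hcl i)

end T2Free

end InducedMatching

theorem exists_injective_neighborSet_inter {V : Type*} [Finite V] {X : SimpleGraph V}
    {Δ Γ : Set V} {n : ℕ} (hnum : n ≤ numClasses X Δ Γ) :
    ∃ l : Fin n → V, (∀ i, l i ∈ Δ) ∧ Function.Injective fun i => X.neighborSet (l i) ∩ Γ := by
  let T (i : Fin n) : ↥((X.neighborSet · ∩ Γ) '' Δ) :=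
    (Finite.equivFin ((X.neighborSet · ∩ Γ) '' Δ)).symm (Fin.castLE hnum i)
  have hT : T.Injective := (Equiv.injective _).comp (Fin.castLE_injective hnum)
  choose l hlΔ hlT using fun i => (T i).2
  refine ⟨l, hlΔ, fun i j hij => hT (Subtype.ext ?_)⟩
  rw [← hlT i, ← hlT j]
  exact hij

namespace IsEquitablePartition

variable {V : Type*} [Finite V] {X : SimpleGraph V} {𝓕 : Set (Set V)} {Δ Γ Λ : Set V} {α : V}

-- Otherwise some `l k` is not adjacent to `c`, and any neighbor `c'` of `l k` in `Λ` has no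
-- neighbor in common with `c` in `Δ`.
theorem eq_of_adj_of_adj (h : IsEquitablePartition X 𝓕) (hα : {α} ∈ 𝓕) (hconn : X.Connected)
    (hbip : X.IsBipartite) (hch : NoLongInducedCycle X) (hT2 : T2Free X) (hΔ : Δ ∈ 𝓕)
    (hΛ : Λ ∈ 𝓕) {l u : Fin 3 → V} (hlu : IsInducedMatching X l u) (hlΔ : ∀ i, l i ∈ Δ) {c : V}
    (hc : c ∈ Λ) (hl : ∀ i, X.dist α (l i) = X.dist α c + 1)
    (hu : ∀ i, X.dist α (u i) = X.dist α c + 2) {i j : Fin 3} (hi : X.Adj c (l i))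
    (hj : X.Adj c (l j)) : i = j := by
  by_contra hij
  obtain ⟨k, hk⟩ := hT2.exists_not_adj hbip hlu c
  obtain ⟨c', hc', hkc'⟩ := h.exists_mem_adj hΔ hΛ (hlΔ i) (hlΔ k) hc hi.symm
  have hne : c ≠ c' := by
    rintro rfl
    exact hk hkc'.symm
  have hcl : ∀ a, X.Adj c (l (![i, j] a)) := by simp [Fin.forall_fin_two, hi, hj]
  have hinj : Function.Injective ![i, j] := by
    simpa [Function.Injective, Fin.forall_fin_two, eq_comm] using hij
  obtain ⟨a, ha⟩ := hT2.exists_adj_of_dist_eq hbip hconn (hlu.comp_injective hinj) hne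
    (h.dist_eq_of_mem hα hconn hΛ hc hc') hcl (fun _ => hl _) (fun _ => hu _)
  exact hk (h.adj_of_adj_adj_adj hα hconn hbip hch hΛ hΔ hc (hlΔ _) hc' (hlΔ k) (hcl a) ha
    hkc'.symm)

theorem not_isInducedMatching_of_dist_eq (h : IsEquitablePartition X 𝓕) (hα : {α} ∈ 𝓕)
    (hconn : X.Connected) (hbip : X.IsBipartite) (hch : NoLongInducedCycle X) (hT2 : T2Free X)
    (hΔ : Δ ∈ 𝓕) {l u : Fin 3 → V} (hlΔ : ∀ i, l i ∈ Δ) {d : ℕ}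
    (hl : ∀ i, X.dist α (l i) = d) (hu : ∀ i, X.dist α (u i) = d + 1) :
    ¬IsInducedMatching X l u := by
  induction d generalizing Δ l u with
  | zero =>
    intro hlu
    have hlα (i) : l i = α := (hconn.dist_eq_zero_iff.1 (hl i)).symm
    have hadj := hlu.adj 1
    rw [hlα, ← hlα 0, hlu] at hadj
    exact absurd hadj (by decide)
  | succ d ih =>
    intro hlu
    have hl0 : l 0 ≠ α := by
      intro hl0
      simpa [hl0] using hl 0
    obtain ⟨w, hlw, hw⟩ := exists_adj_dist_add_one_eq hconn hl0
    obtain ⟨Λ, hΛ, hwΛ⟩ := h.exists_mem w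
    choose c hcΛ hlc using fun i => h.exists_mem_adj hΔ hΛ (hlΔ 0) (hlΔ i) hwΛ hlw
    have hc (i) : X.dist α (c i) = d := by
      rw [h.dist_eq_of_mem hα hconn hΛ (hcΛ i) hwΛ]
      have := hl 0
      omega
    refine ih hΛ hcΛ hc hl fun i j => ⟨fun hij => ?_, fun hij => hij ▸ (hlc i).symm⟩
    exact h.eq_of_adj_of_adj hα hconn hbip hch hT2 hΔ hΛ hlu hlΔ (hcΛ i)
      (by simp [hl, hc]) (by simp [hu, hc]) (hlc i).symm hij

theorem neighborSet_inter_eq_of_adj (h : IsEquitablePartition X 𝓕) (hα : {α} ∈ 𝓕)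
    (hconn : X.Connected) (hbip : X.IsBipartite) (hch : NoLongInducedCycle X) (hΔ : Δ ∈ 𝓕)
    (hΓ : Γ ∈ 𝓕) {u v w : V} (hu : u ∈ Δ) (hv : v ∈ Δ) (hw : w ∈ Γ) (huw : X.Adj u w)
    (hvw : X.Adj v w) : X.neighborSet u ∩ Γ = X.neighborSet v ∩ Γ :=
  Set.Subset.antisymm
    (fun _ hz => ⟨h.adj_of_adj_adj_adj hα hconn hbip hch hΔ hΓ hv hw hu hz.2 hvw huw.symm hz.1,
      hz.2⟩)
    (fun _ hz => ⟨h.adj_of_adj_adj_adj hα hconn hbip hch hΔ hΓ hu hw hv hz.2 huw hvw.symm hz.1,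
      hz.2⟩)

theorem exists_isInducedMatching_of_le_numClasses (h : IsEquitablePartition X 𝓕)
    (hα : {α} ∈ 𝓕) (hconn : X.Connected) (hbip : X.IsBipartite) (hch : NoLongInducedCycle X)
    (hΔ : Δ ∈ 𝓕) (hΓ : Γ ∈ 𝓕) {n : ℕ} (hn : 2 ≤ n) (hnum : n ≤ numClasses X Δ Γ) :
    ∃ l u : Fin n → V, (∀ i, l i ∈ Δ) ∧ (∀ i, u i ∈ Γ) ∧ IsInducedMatching X l u := by
  have : Nontrivial (Fin n) := Fin.nontrivial_iff_two_le.2 hn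
  obtain ⟨l, hlΔ, hl⟩ := exists_injective_neighborSet_inter hnum
  have hadj (i) : ∃ y ∈ Γ, X.Adj (l i) y := by
    by_contra! hi
    have hempty (j) : X.neighborSet (l j) ∩ Γ = ∅ := by
      refine Set.eq_empty_of_forall_notMem fun z ⟨hjz, hz⟩ => ?_
      obtain ⟨y, hy, hiy⟩ := h.exists_mem_adj hΔ hΓ (hlΔ j) (hlΔ i) hz hjz
      exact hi y hy hiy
    obtain ⟨j, hj⟩ := exists_ne i
    exact hj (hl ((hempty j).trans (hempty i).symm))
  choose u huΓ hlu using hadj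
  exact ⟨l, u, hlΔ, huΓ, fun i j => ⟨fun hij => hl (h.neighborSet_inter_eq_of_adj hα hconn hbip
    hch hΔ hΓ (hlΔ i) (hlΔ j) (huΓ j) hij (hlu j)), fun hij => hij ▸ hlu i⟩⟩

end IsEquitablePartition

theorem stmt_12_general {V : Type*} [Finite V] {X : SimpleGraph V} (hconn : X.Connected)
    (hbip : X.IsBipartite) (hch : NoLongInducedCycle X) (hT2 : T2Free X) {𝓕 : Set (Set V)}
    (h : IsEquitablePartition X 𝓕) {α : V} (hα : {α} ∈ 𝓕) {Δ Γ : Set V} (hΔ : Δ ∈ 𝓕)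
    (hΓ : Γ ∈ 𝓕) : numClasses X Δ Γ ≤ 2 := by
  by_contra! hnum
  obtain ⟨l, u, hlΔ, huΓ, hlu⟩ :=
    h.exists_isInducedMatching_of_le_numClasses hα hconn hbip hch hΔ hΓ (by norm_num) hnum
  have hl (i) : X.dist α (l i) = X.dist α (l 0) := h.dist_eq_of_mem hα hconn hΔ (hlΔ i) (hlΔ 0)
  have hu (i) : X.dist α (u i) = X.dist α (u 0) := h.dist_eq_of_mem hα hconn hΓ (huΓ i) (huΓ 0)
  have hle := dist_le_add_one_of_adj (α := α) (hlu.adj 0)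
  have hge := dist_le_add_one_of_adj (α := α) (hlu.adj 0).symm
  rcases (dist_ne_of_adj (α := α) hconn hbip (hlu.adj 0)).lt_or_gt with hlt | hgt
  · exact h.not_isInducedMatching_of_dist_eq hα hconn hbip hch hT2 hΔ hlΔ hl
      (fun i => by rw [hu, le_antisymm hle hlt]) hlu
  · exact h.not_isInducedMatching_of_dist_eq hα hconn hbip hch hT2 hΓ huΓ hu
      (fun i => by rw [hl, le_antisymm hge hgt]) hlu.symm

theorem stmt_12 {Ω : Type*} [Fintype Ω] (X : SimpleGraph Ω) (P Q : Set Ω)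
    (hconn : X.Connected) (hbip : IsBipartition X P Q) (hchordal : NoLongInducedCycle X)
    (hT2 : T2Free X)
    (α : Ω) (C : CoherentConfiguration Ω)
    (hcomp : C.Compatible X) (hdist : C.Distinguished α)
    (Δ Γ : Set Ω) (hΔ : C.IsFiber Δ) (hΓ : C.IsFiber Γ) (hne : Δ ≠ Γ) :
    numClasses X Δ Γ ≤ 2 :=
  stmt_12_general hconn hbip.isBipartite hchordal hT2 hcomp.isEquitablePartition
    hdist.isFiber_singleton hΔ hΓ
end
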